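/- Let q = p^f be a power of a prime p, let n ≥ 2 and suppose GL_n(q) is not solvable. Let π be a set of primes with 2 ∈ π, 3 ∈ π and p ∉ π, and let H be a solvable Hall π-subgroup of GL_n(q). Set G = H·SL_n(q). Then there exist x, y, z ∈ G such that H ∩ H^x ∩ H^y ∩ H^z is contained in the center Z(GL_n(q)), i.e. consists of scalar matrices. -/

import Mathlib

open Matrix Pointwise

/-- `H^x = x⁻¹ H x`. -/
def conjBy {G : Type*} [Group G] (H : Subgroup G) (x : G) : Subgroup G :=
  Subgroup.map ((MulAut.conj x⁻¹).toMonoidHom) H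

/-- Hall π-subgroup of the whole group. -/
def IsHallSubgroup {G : Type*} [Group G] (π : Set ℕ) (H : Subgroup G) : Prop :=
  (∀ r : ℕ, r.Prime → r ∣ Nat.card H → r ∈ π) ∧ ∀ r ∈ π, ¬ r ∣ H.index

/-- Hall π-subgroup of the subgroup `K`. -/
def IsHallSubgroupIn {G : Type*} [Group G] (π : Set ℕ) (K H : Subgroup G) : Prop :=
  H ≤ K ∧ (∀ r : ℕ, r.Prime → r ∣ Nat.card H → r ∈ π) ∧ ∀ r ∈ π, ¬ r ∣ H.relIndex K

/-- The subgroup `SL_n` of `GL_n`. -/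
def SLsub (n : ℕ) (F : Type*) [Field F] : Subgroup (GL (Fin n) F) where
  carrier := {g | Matrix.det (g : Matrix (Fin n) (Fin n) F) = 1}
  one_mem' := by simp
  mul_mem' := by
    intro a b ha hb
    simp only [Set.mem_setOf_eq, Units.val_mul, Matrix.det_mul] at *
    rw [ha, hb, one_mul]
  inv_mem' := by
    intro g hg
    simp only [Set.mem_setOf_eq] at *
    have h1 : ((g⁻¹ : GL (Fin n) F) : Matrix (Fin n) (Fin n) F) *
        (g : Matrix (Fin n) (Fin n) F) = 1 := g.inv_mul
    have := congrArg Matrix.det h1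
    rw [Matrix.det_mul, Matrix.det_one, hg, mul_one] at this
    exact this

/-- The group of similitudes of the bilinear form `B` (acting on row vectors). -/
def similitudeGroup {n : ℕ} {F : Type*} [Field F]
    (B : (Fin n → F) → (Fin n → F) → F) : Subgroup (GL (Fin n) F) where
  carrier := {g | ∃ c : Fˣ, ∀ u v : Fin n → F,
    B (Matrix.vecMul u (g : Matrix (Fin n) (Fin n) F))
      (Matrix.vecMul v (g : Matrix (Fin n) (Fin n) F)) = (c : F) * B u v}
  one_mem' := ⟨1, by simp⟩
  mul_mem' := by
    rintro a b ⟨c, hc⟩ ⟨d, hd⟩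
    refine ⟨c * d, fun u v => ?_⟩
    simp only [Units.val_mul, ← Matrix.vecMul_vecMul, hd, hc]
    ring
  inv_mem' := by
    rintro g ⟨c, hc⟩
    refine ⟨c⁻¹, fun u v => ?_⟩
    have h1 : ∀ w : Fin n → F, Matrix.vecMul
        (Matrix.vecMul w ((g⁻¹ : GL (Fin n) F) : Matrix (Fin n) (Fin n) F))
        (g : Matrix (Fin n) (Fin n) F) = w := by
      intro w
      rw [Matrix.vecMul_vecMul, g.inv_mul, Matrix.vecMul_one]
    have h2 := hc (Matrix.vecMul u ((g⁻¹ : GL (Fin n) F) : Matrix (Fin n) (Fin n) F))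
      (Matrix.vecMul v ((g⁻¹ : GL (Fin n) F) : Matrix (Fin n) (Fin n) F))
    rw [h1, h1] at h2
    rw [h2, Units.val_inv_eq_inv_val, inv_mul_cancel_left₀ (by exact_mod_cast c.ne_zero)]

/-- The isometry group of the bilinear form `B` (acting on row vectors). -/
def isometryGroup {n : ℕ} {F : Type*} [Field F]
    (B : (Fin n → F) → (Fin n → F) → F) : Subgroup (GL (Fin n) F) where
  carrier := {g | ∀ u v : Fin n → F,
    B (Matrix.vecMul u (g : Matrix (Fin n) (Fin n) F))
      (Matrix.vecMul v (g : Matrix (Fin n) (Fin n) F)) = B u v}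
  one_mem' := by simp
  mul_mem' := by
    intro a b ha hb u v
    simp only [Set.mem_setOf_eq] at ha hb
    simp only [Units.val_mul, ← Matrix.vecMul_vecMul]
    rw [hb, ha]
  inv_mem' := by
    intro g hg u v
    have h1 : ∀ w : Fin n → F, Matrix.vecMul
        (Matrix.vecMul w ((g⁻¹ : GL (Fin n) F) : Matrix (Fin n) (Fin n) F))
        (g : Matrix (Fin n) (Fin n) F) = w := by
      intro w
      rw [Matrix.vecMul_vecMul, g.inv_mul, Matrix.vecMul_one]
    have h2 := hg (Matrix.vecMul u ((g⁻¹ : GL (Fin n) F) : Matrix (Fin n) (Fin n) F))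
      (Matrix.vecMul v ((g⁻¹ : GL (Fin n) F) : Matrix (Fin n) (Fin n) F))
    rw [h1, h1] at h2
    exact h2.symm

/-- The group of similitudes of the quadratic form `Q` (acting on row vectors). -/
def qSimilitudeGroup {n : ℕ} {F : Type*} [Field F]
    (Q : (Fin n → F) → F) : Subgroup (GL (Fin n) F) where
  carrier := {g | ∃ c : Fˣ, ∀ v : Fin n → F,
    Q (Matrix.vecMul v (g : Matrix (Fin n) (Fin n) F)) = (c : F) * Q v}
  one_mem' := ⟨1, by simp⟩
  mul_mem' := by
    rintro a b ⟨c, hc⟩ ⟨d, hd⟩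
    refine ⟨c * d, fun v => ?_⟩
    simp only [Units.val_mul, ← Matrix.vecMul_vecMul, hd, hc]
    ring
  inv_mem' := by
    rintro g ⟨c, hc⟩
    refine ⟨c⁻¹, fun v => ?_⟩
    have h1 : ∀ w : Fin n → F, Matrix.vecMul
        (Matrix.vecMul w ((g⁻¹ : GL (Fin n) F) : Matrix (Fin n) (Fin n) F))
        (g : Matrix (Fin n) (Fin n) F) = w := by
      intro w
      rw [Matrix.vecMul_vecMul, g.inv_mul, Matrix.vecMul_one]
    have h2 := hc (Matrix.vecMul v ((g⁻¹ : GL (Fin n) F) : Matrix (Fin n) (Fin n) F))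
    rw [h1] at h2
    rw [h2, Units.val_inv_eq_inv_val, inv_mul_cancel_left₀ (by exact_mod_cast c.ne_zero)]

/-- The unitary group `GU_n` with respect to the field automorphism `φ`. -/
def GUgrp (n : ℕ) {K : Type*} [Field K] (φ : K →+* K) : Subgroup (GL (Fin n) K) where
  carrier := {g | ((g : Matrix (Fin n) (Fin n) K).map φ)ᵀ * (g : Matrix (Fin n) (Fin n) K) = 1}
  one_mem' := by
    simp [Matrix.map_one φ φ.map_zero φ.map_one]
  mul_mem' := by
    intro a b ha hb
    simp only [Set.mem_setOf_eq, Units.val_mul, Matrix.map_mul, Matrix.transpose_mul] at *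
    calc ((b : Matrix (Fin n) (Fin n) K).map φ)ᵀ * ((a : Matrix (Fin n) (Fin n) K).map φ)ᵀ *
          ((a : Matrix (Fin n) (Fin n) K) * (b : Matrix (Fin n) (Fin n) K))
        = ((b : Matrix (Fin n) (Fin n) K).map φ)ᵀ *
          (((a : Matrix (Fin n) (Fin n) K).map φ)ᵀ * (a : Matrix (Fin n) (Fin n) K)) *
          (b : Matrix (Fin n) (Fin n) K) := by noncomm_ring
      _ = 1 := by rw [ha, mul_one, hb]
  inv_mem' := by
    intro g hg
    simp only [Set.mem_setOf_eq] at *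
    have hcomm : (g : Matrix (Fin n) (Fin n) K) * ((g : Matrix (Fin n) (Fin n) K).map φ)ᵀ = 1 :=
      mul_eq_one_comm.mp hg
    have h1 : ((g : Matrix (Fin n) (Fin n) K) * ((g⁻¹ : GL (Fin n) K) : Matrix (Fin n) (Fin n) K)).map φ = 1 := by
      rw [g.mul_inv]
      exact Matrix.map_one φ φ.map_zero φ.map_one
    rw [Matrix.map_mul] at h1
    have h2 := congrArg Matrix.transpose h1
    rw [Matrix.transpose_mul, Matrix.transpose_one] at h2
    calc (((g⁻¹ : GL (Fin n) K) : Matrix (Fin n) (Fin n) K).map φ)ᵀ *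
          ((g⁻¹ : GL (Fin n) K) : Matrix (Fin n) (Fin n) K)
        = (((g⁻¹ : GL (Fin n) K) : Matrix (Fin n) (Fin n) K).map φ)ᵀ *
          (((g : Matrix (Fin n) (Fin n) K).map φ)ᵀ * (g : Matrix (Fin n) (Fin n) K)) *
          ((g⁻¹ : GL (Fin n) K) : Matrix (Fin n) (Fin n) K) := by rw [hg, mul_one]
      _ = ((((g⁻¹ : GL (Fin n) K) : Matrix (Fin n) (Fin n) K).map φ)ᵀ *
          ((g : Matrix (Fin n) (Fin n) K).map φ)ᵀ) *
          ((g : Matrix (Fin n) (Fin n) K) * ((g⁻¹ : GL (Fin n) K) : Matrix (Fin n) (Fin n) K)) := by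
            noncomm_ring
      _ = 1 := by rw [h2, g.mul_inv, mul_one]

/-!
A Hall subgroup `H` as in the statement has order prime to `p` and odd index, and `p > 3`.

Suppose first that `n ≥ 3`. As the index is odd, `H` contains a conjugate of every `2`-subgroup, in
particular a homology of order two. If no nontrivial idempotent of `End V` commutes with all its
`H`-conjugates, the last nonscalar derived term `A` of `H` is of Heisenberg type: its commutators
and its centre are scalar. A commutator of a homology with an element of `A` fixes a
subspace of codimension at most two pointwise, which forces `n ≤ 4`, and in dimensions `3` and `4`
explicit small `2`-subgroups of `H` contradict this structure. So such an idempotent exists, and the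
same argument applied to the stabiliser of a block shows that `H` permutes the blocks of a
decomposition of `V` into at least two blocks of dimension at most two. If `x` is block upper
unitriangular with all blocks above the diagonal nonzero, then any `g` such that `g` and
`x g x⁻¹` both permute the blocks must fix each block and commute with `x`; three such `x` leave
only scalars.

For `n = 2` pass to `PGL₂`. The image of `H` either centralises the class of a matrix of trace zero
or normalises a self-centralising subgroup of order at most four; in both cases a first conjugate
from `SL₂` leaves an intersection of order at most six. Every nontrivial element is moved out of `H`
by some conjugation from `SL₂`, so that each further conjugate at least halves the order:
`6, 3, 1`.
-/

section Groups

variable {G : Type*} [Group G]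

theorem mem_conjBy {H : Subgroup G} {g x : G} : g ∈ conjBy H x ↔ x * g * x⁻¹ ∈ H := by
  refine ⟨?_, fun h => ⟨_, h, by simp [mul_assoc]⟩⟩
  rintro ⟨h, hh, rfl⟩
  simpa [mul_assoc] using hh

theorem exists_forall_conj_mem_of_isPGroup {p : ℕ} [Fact p.Prime] {H Q : Subgroup G}
    (hH : ¬ p ∣ H.index) (hQ : IsPGroup p Q) :
    ∃ g : G, ∀ x ∈ Q, g⁻¹ * x * g ∈ H := by
  obtain ⟨c, hc⟩ := hQ.nonempty_fixed_point_of_prime_not_dvd_card (G ⧸ H)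
    (by rwa [← Subgroup.index])
  obtain ⟨g, rfl⟩ := QuotientGroup.mk_surjective c
  refine ⟨g, fun x hx => ?_⟩
  have hfix : ((x * g : G) : G ⧸ H) = g := hc ⟨x, hx⟩
  simpa [mul_assoc] using QuotientGroup.eq.1 hfix.symm

theorem exists_conj_mem_pair [Finite G] {p k l : ℕ} [Fact p.Prime] {H : Subgroup G}
    (hH : ¬ p ∣ H.index) {u t : G} (hu : u ^ p ^ k = 1) (ht : t ^ p ^ l = 1)
    (htu : t * u * t⁻¹ ∈ Subgroup.zpowers u) : ∃ g : G, g⁻¹ * u * g ∈ H ∧ g⁻¹ * t * g ∈ H := by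
  have isPGroup_zpowers {x : G} {m : ℕ} (hx : x ^ p ^ m = 1) :
      IsPGroup p (Subgroup.zpowers x) :=
    IsPGroup.of_card_dvd_pow (Nat.card_zpowers x ▸ orderOf_dvd_of_pow_eq_one hx)
  have hnorm : Subgroup.zpowers t ≤ Subgroup.normalizer (Subgroup.zpowers u : Set G) := by
    refine Subgroup.zpowers_le.2 (Subgroup.mem_normalizer_fintype ?_)
    rintro _ ⟨i, rfl⟩
    simpa only [SetLike.mem_coe, conj_zpow] using Subgroup.zpow_mem _ htu i
  obtain ⟨g, hg⟩ := exists_forall_conj_mem_of_isPGroup hH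
    ((isPGroup_zpowers ht).to_sup_of_normal_right' (isPGroup_zpowers hu) hnorm)
  exact ⟨g, hg u (Subgroup.mem_sup_right (Subgroup.mem_zpowers u)),
    hg t (Subgroup.mem_sup_left (Subgroup.mem_zpowers t))⟩

theorem normalizer_le_normalizer_commutator (K : Subgroup G) :
    Subgroup.normalizer (K : Set G) ≤ Subgroup.normalizer (⁅K, K⁆ : Subgroup G) := by
  intro g hg
  rw [Subgroup.mem_normalizer_iff_map_conj_eq] at hg ⊢
  rw [Subgroup.map_commutator, hg]

theorem normalizer_le_normalizer_centralizer (S : Set G) :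
    Subgroup.normalizer S ≤ Subgroup.normalizer (Subgroup.centralizer S : Set G) := by
  refine Subgroup.le_normalizer_iff.2 fun g hg x hx => ?_
  refine Subgroup.mem_centralizer_iff.2 fun k hk => ?_
  have hk' : g⁻¹ * k * g ∈ S := (Subgroup.mem_set_normalizer_iff''.1 hg k).1 hk
  calc k * (g * x * g⁻¹) = g * ((g⁻¹ * k * g) * x) * g⁻¹ := by group
    _ = g * x * g⁻¹ * k := by rw [Subgroup.mem_centralizer_iff.1 hx _ hk']; group

theorem exists_last_derived_term {H Z : Subgroup G} (hs : Group.IsSolvable H) (hHZ : ¬ H ≤ Z) :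
    ∃ A ≤ H, ¬ A ≤ Z ∧ ⁅A, A⁆ ≤ Z ∧
      Subgroup.normalizer (H : Set G) ≤ Subgroup.normalizer (A : Set G) := by
  classical
  let D : ℕ → Subgroup G := fun k => (derivedSeries H k).map H.subtype
  have hD0 : D 0 = H := by simp [D, ← MonoidHom.range_eq_map]
  have hDsucc (k : ℕ) : D (k + 1) = ⁅D k, D k⁆ := by
    simp only [D, derivedSeries_succ, Subgroup.map_commutator]
  have hDnorm (k : ℕ) :
      Subgroup.normalizer (H : Set G) ≤ Subgroup.normalizer (D k : Set G) := by
    induction k with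
    | zero => rw [hD0]
    | succ k ih => rw [hDsucc]; exact ih.trans (normalizer_le_normalizer_commutator _)
  have hex : ∃ k, D k ≤ Z := by
    obtain ⟨n, hn⟩ := hs.solvable
    exact ⟨n, by simp [D, hn]⟩
  obtain ⟨k, hk⟩ := Nat.exists_eq_succ_of_ne_zero (n := Nat.find hex)
    fun h0 => hHZ (hD0 ▸ h0 ▸ Nat.find_spec hex)
  refine ⟨D k, Subgroup.map_subtype_le _, Nat.find_min hex (by omega), ?_, hDnorm k⟩
  rw [← hDsucc, ← Nat.succ_eq_add_one, ← hk]
  exact Nat.find_spec hex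

theorem relIndex_dvd_index_of_le_normalizer [Finite G] {H B : Subgroup G}
    (hHB : H ≤ Subgroup.normalizer (B : Set G)) : H.relIndex B ∣ H.index := by
  have hsup : B.relIndex (H ⊔ B) = B.relIndex H := by
    have h := Subgroup.relIndex_sup_right (H.subgroupOf (Subgroup.normalizer B))
      (B.subgroupOf (Subgroup.normalizer B))
    rwa [← Subgroup.subgroupOf_sup hHB Subgroup.le_normalizer, Subgroup.relIndex_subgroupOf hHB,
      Subgroup.relIndex_subgroupOf (sup_le hHB Subgroup.le_normalizer)] at h
  have hH := Subgroup.relIndex_mul_relIndex (H ⊓ B) H (H ⊔ B) inf_le_left le_sup_left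
  have hB := Subgroup.relIndex_mul_relIndex (H ⊓ B) B (H ⊔ B) inf_le_right le_sup_right
  rw [Subgroup.inf_relIndex_left] at hH
  rw [Subgroup.inf_relIndex_right, hsup, ← hH, mul_comm] at hB
  have hpos : 0 < B.relIndex H := Nat.pos_of_ne_zero Subgroup.index_ne_zero_of_finite
  rw [Nat.eq_of_mul_eq_mul_left hpos hB,
    ← Subgroup.relIndex_mul_index (le_sup_left : H ≤ H ⊔ B)]
  exact dvd_mul_right _ _

end Groups

section Conjugation

variable {G : Type*} [Group G]

theorem exists_subgroup_of_forall_conj_mem {S H : Subgroup G} {k : G}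
    (hk : ∀ y ∈ S, y * k * y⁻¹ ∈ H) :
    ∃ L ≤ H, k ∈ L ∧ S ≤ Subgroup.normalizer (L : Set G) := by
  let T : Set G := {g | ∃ y ∈ S, y * k * y⁻¹ = g}
  refine ⟨Subgroup.closure T, (Subgroup.closure_le _).2 ?_,
    Subgroup.subset_closure ⟨1, S.one_mem, by simp⟩, Subgroup.le_normalizer_iff.2 fun g hg => ?_⟩
  · rintro _ ⟨y, hy, rfl⟩
    exact hk y hy
  · have hle : Subgroup.closure T ≤ (Subgroup.closure T).comap (MulAut.conj g).toMonoidHom := by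
      refine (Subgroup.closure_le _).2 ?_
      rintro _ ⟨y, hy, rfl⟩
      exact Subgroup.subset_closure ⟨g * y, S.mul_mem hg hy, by simp [mul_assoc]⟩
    exact fun x hx => hle hx

theorem relIndex_centralizer_dvd_factorial {K : Subgroup G} {S : Set G} [Finite S]
    (hK : K ≤ Subgroup.normalizer S) :
    (Subgroup.centralizer S).relIndex K ∣ (Nat.card S).factorial := by
  let f : K →* Equiv.Perm S :=
    { toFun k := Equiv.Perm.subtypePerm (MulAut.conj (k : G)).toEquiv
        fun x => (Subgroup.mem_set_normalizer_iff.1 (hK k.2) x).symm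
      map_one' := by ext; simp
      map_mul' k l := Equiv.ext fun x => Subtype.ext
        (DFunLike.congr_fun (map_mul MulAut.conj (k : G) l) (x : G)) }
  have hker : f.ker = (Subgroup.centralizer S).subgroupOf K := by
    ext k
    simp [f, MonoidHom.mem_ker, Equiv.ext_iff, Subgroup.mem_subgroupOf,
      Subgroup.mem_centralizer_iff, mul_inv_eq_iff_eq_mul, eq_comm (a := (k : G) * _)]
  rw [Subgroup.relIndex, ← hker, Subgroup.index_ker, ← Nat.card_perm]
  exact Subgroup.card_subgroup_dvd_card _

theorem closure_sdiff_eq_of_not_le {B K : Subgroup G} (h : ¬ B ≤ K) :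
    Subgroup.closure (B \ K : Set G) = B := by
  obtain ⟨b, hb, hbK⟩ := SetLike.not_le_iff_exists.1 h
  refine le_antisymm ((Subgroup.closure_le _).2 Set.sdiff_subset) fun x hx => ?_
  have hmem {y : G} (hy : y ∈ B) (hyK : y ∉ K) : y ∈ Subgroup.closure (B \ K : Set G) :=
    Subgroup.subset_closure ⟨hy, hyK⟩
  by_cases hxK : x ∈ K
  · have hbx : b * x ∉ K := fun h => hbK ((K.mul_mem_cancel_right hxK).1 h)
    exact ((Subgroup.closure _).mul_mem_cancel_left (hmem hb hbK)).1 (hmem (B.mul_mem hb hx) hbx)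
  · exact hmem hx hxK

theorem relIndex_mul_card_inf (H K : Subgroup G) :
    H.relIndex K * Nat.card ↥(H ⊓ K) = Nat.card K := by
  have h := Subgroup.relIndex_mul_relIndex ⊥ (H ⊓ K) K bot_le inf_le_right
  rwa [Subgroup.inf_relIndex_right, Subgroup.relIndex_bot_left, Subgroup.relIndex_bot_left,
    mul_comm] at h

theorem card_le_six_of_le_normalizer [Finite G] {B K : Subgroup G} (hB : Nat.card B ≤ 4)
    (hCB : Subgroup.centralizer (B : Set G) ≤ B) (hK : K ≤ Subgroup.normalizer (B : Set G))
    (hBK : ¬ B ≤ K) : Nat.card K ≤ 6 := by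
  let S : Set G := B \ K
  have hS : K ≤ Subgroup.normalizer S := fun k hk => Subgroup.mem_set_normalizer_iff.2 fun x =>
    and_congr (Subgroup.mem_normalizer_iff.1 (hK hk) x)
      (not_congr (Subgroup.mem_normalizer_iff.1 (Subgroup.le_normalizer hk) x))
  have hcent : Subgroup.centralizer S ≤ B := by
    rw [← Subgroup.centralizer_closure, closure_sdiff_eq_of_not_le hBK]
    exact hCB
  have hcard : Nat.card S + Nat.card ↥(B ⊓ K) ≤ 4 :=
    (add_comm _ _).trans_le
      ((Set.ncard_inter_add_ncard_sdiff_eq_ncard (B : Set G) K).trans_le hB)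
  have hSpos : 0 < Nat.card S :=
    (Set.ncard_pos).2 (Set.sdiff_nonempty.2 hBK)
  have hpos : 0 < Nat.card ↥(B ⊓ K) := Nat.card_pos
  calc Nat.card K
      = (Subgroup.centralizer S).relIndex K * Nat.card ↥(Subgroup.centralizer S ⊓ K) :=
        (relIndex_mul_card_inf _ _).symm
    _ ≤ (Nat.card S).factorial * Nat.card ↥(B ⊓ K) := Nat.mul_le_mul
        (Nat.le_of_dvd (Nat.factorial_pos _) (relIndex_centralizer_dvd_factorial hS))
        (Subgroup.card_le_of_le (inf_le_inf_right K hcent))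
    _ ≤ 6 := by
        have : Nat.card S ≤ 3 := by omega
        interval_cases Nat.card S <;> simp only [Nat.factorial] <;> omega

theorem exists_card_inf_conjBy_le [Finite G] {S H : Subgroup G}
    (hH : ∀ k ≠ 1, ∃ y ∈ S, y * k * y⁻¹ ∉ H) (K : Subgroup G) :
    ∃ y ∈ S, Nat.card ↥(K ⊓ conjBy H y) ≤ max 1 (Nat.card K / 2) := by
  rcases eq_or_ne K ⊥ with rfl | hK
  · exact ⟨1, S.one_mem, by simp⟩
  obtain ⟨k, hk⟩ := (Subgroup.ne_bot_iff_exists_ne_one).1 hK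
  obtain ⟨y, hy, hyk⟩ := hH k (by simpa using hk)
  refine ⟨y, hy, le_max_of_le_right ?_⟩
  have hindex : (conjBy H y).relIndex K ≠ 1 := fun h =>
    hyk (mem_conjBy.1 (Subgroup.relIndex_eq_one.1 h k.2))
  have hne : (conjBy H y).relIndex K ≠ 0 := Subgroup.index_ne_zero_of_finite
  rw [Nat.le_div_iff_mul_le two_pos, ← relIndex_mul_card_inf (conjBy H y) K, inf_comm, mul_comm]
  exact Nat.mul_le_mul_right _ (by omega)

end Conjugation

section ScalarUnits

/-- The units of the algebra `R` that are scalar, i.e. the image of `Fˣ`. -/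
def scalarUnits (F R : Type*) [CommSemiring F] [Semiring R] [Algebra F R] : Subgroup Rˣ :=
  (Units.map (algebraMap F R : F →* R)).range

variable {F R : Type*}

theorem scalarUnits_le_center [CommSemiring F] [Semiring R] [Algebra F R] :
    scalarUnits F R ≤ Subgroup.center Rˣ := by
  rintro _ ⟨c, rfl⟩
  rw [Subgroup.mem_center_iff]
  exact fun g => Units.ext (Algebra.commutes (c : F) (g : R)).symm

theorem mem_scalarUnits_iff_exists_smul [Field F] [Ring R] [Algebra F R] {x : Rˣ} :
    x ∈ scalarUnits F R ↔ ∃ c : F, (x : R) = c • (1 : R) := by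
  refine ⟨?_, fun ⟨c, hc⟩ => ?_⟩
  · rintro ⟨c, rfl⟩
    exact ⟨c, Algebra.algebraMap_eq_smul_one _⟩
  · rcases subsingleton_or_nontrivial R with _ | _
    · exact ⟨1, Subsingleton.elim _ _⟩
    · have hc0 : c ≠ 0 := by
        rintro rfl
        exact x.ne_zero (by rw [hc, zero_smul])
      exact ⟨Units.mk0 c hc0, Units.ext (by simp [hc, Algebra.algebraMap_eq_smul_one])⟩

instance normal_scalarUnits [CommSemiring F] [Semiring R] [Algebra F R] :
    (scalarUnits F R).Normal :=
  ⟨fun z hz g => by rwa [Subgroup.mem_center_iff.1 (scalarUnits_le_center hz) g,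
    mul_inv_cancel_right]⟩

end ScalarUnits

section ExtendByOne

variable {F V W : Type*} [Field F] [AddCommGroup V] [Module F V] [AddCommGroup W] [Module F W]

/-- The endomorphism of `V` extending an endomorphism of the direct summand `P W` by the identity
on the complement `ker Q`. -/
def extendByOne (P : W →ₗ[F] V) (Q : V →ₗ[F] W) (h : Q ∘ₗ P = LinearMap.id) :
    Module.End F W →* Module.End F V where
  toFun M := 1 + P ∘ₗ (M - 1) ∘ₗ Q
  map_one' := by simp
  map_mul' M N := by
    ext x
    have hQP (w : W) : Q (P w) = w := LinearMap.congr_fun h w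
    simp only [LinearMap.add_apply, LinearMap.comp_apply, LinearMap.sub_apply,
      Module.End.one_apply, Module.End.mul_apply, map_add, map_sub, hQP]
    abel

variable {P : W →ₗ[F] V} {Q : V →ₗ[F] W} {h : Q ∘ₗ P = LinearMap.id}

theorem extendByOne_apply (M : Module.End F W) (x : V) :
    extendByOne P Q h M x = x + P (M (Q x) - Q x) := rfl

theorem extendByOne_apply_of_finrank_eq [Module.Finite F V] [Module.Finite F W]
    (hWV : Module.finrank F W = Module.finrank F V) (M : Module.End F W) (x : V) :
    extendByOne P Q h M x = P (M (Q x)) := by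
  have hQP (w : W) : Q (P w) = w := LinearMap.congr_fun h w
  have hPQ : P (Q x) = x :=
    (LinearMap.injective_iff_surjective_of_finrank_eq_finrank hWV.symm).2
      (Function.LeftInverse.surjective hQP) (hQP (Q x))
  rw [extendByOne_apply, map_sub, hPQ, add_sub_cancel]

theorem map_extendByOne_neg_of_finrank_eq [Module.Finite F V] [Module.Finite F W]
    (hWV : Module.finrank F W = Module.finrank F V) (u : (Module.End F W)ˣ) :
    Units.map (extendByOne P Q h) (-u) = -Units.map (extendByOne P Q h) u := by
  refine Units.ext (LinearMap.ext fun x => ?_)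
  have hneg (M : Module.End F W) : extendByOne P Q h (-M) x = -extendByOne P Q h M x := by
    simp only [extendByOne_apply_of_finrank_eq hWV, LinearMap.neg_apply, map_neg]
  exact hneg u

theorem conj_extendByOne (g : (Module.End F V)ˣ)
    (h' : (Q ∘ₗ (g : Module.End F V)) ∘ₗ ((↑g⁻¹ : Module.End F V) ∘ₗ P) = LinearMap.id)
    (M : (Module.End F W)ˣ) : g⁻¹ * Units.map (extendByOne P Q h) M * g =
      Units.map (extendByOne ((↑g⁻¹ : Module.End F V) ∘ₗ P) (Q ∘ₗ (g : Module.End F V)) h') M := by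
  ext x
  have hg : (↑g⁻¹ : Module.End F V) ((g : Module.End F V) x) = x := inv_smul_smul g x
  simp [extendByOne_apply, hg]

theorem exists_comp_eq_id_of_finrank_le [Module.Finite F V] [Module.Finite F W]
    (hWV : Module.finrank F W ≤ Module.finrank F V) :
    ∃ (P : W →ₗ[F] V) (Q : V →ₗ[F] W), Q ∘ₗ P = LinearMap.id := by
  obtain ⟨P, hP⟩ := finrank_le_iff_exists_linearMap.1 hWV
  obtain ⟨Q, hQ⟩ := P.exists_leftInverse_of_injective (LinearMap.ker_eq_bot.2 hP)
  exact ⟨P, Q, hQ⟩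

theorem exists_extendByOne_mem [Finite F] [Module.Finite F V] [Module.Finite F W]
    (hWV : Module.finrank F W ≤ Module.finrank F V) {p k l : ℕ} [Fact p.Prime]
    {H : Subgroup (Module.End F V)ˣ} (hH : ¬ p ∣ H.index) {u t : (Module.End F W)ˣ}
    (hu : u ^ p ^ k = 1) (ht : t ^ p ^ l = 1) (htu : t * u * t⁻¹ ∈ Subgroup.zpowers u) :
    ∃ (P : W →ₗ[F] V) (Q : V →ₗ[F] W) (h : Q ∘ₗ P = LinearMap.id),
      Units.map (extendByOne P Q h) u ∈ H ∧ Units.map (extendByOne P Q h) t ∈ H := by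
  have : Finite (Module.End F V) := Module.finite_of_finite F
  obtain ⟨P, Q, h⟩ := exists_comp_eq_id_of_finrank_le hWV
  let f := Units.map (extendByOne P Q h)
  obtain ⟨i, hi⟩ := htu
  obtain ⟨g, hgu, hgt⟩ := exists_conj_mem_pair (k := k) (l := l) hH (u := f u) (t := f t)
    (by rw [← map_pow, hu, map_one]) (by rw [← map_pow, ht, map_one])
    ⟨i, by simp only [← map_zpow, ← map_mul, ← map_inv, ← hi]⟩
  have h' : (Q ∘ₗ (g : Module.End F V)) ∘ₗ ((↑g⁻¹ : Module.End F V) ∘ₗ P) = LinearMap.id := by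
    ext w
    exact (congrArg Q (smul_inv_smul g (P w))).trans (LinearMap.congr_fun h w)
  exact ⟨_, _, h', conj_extendByOne g h' u ▸ hgu, conj_extendByOne g h' t ▸ hgt⟩

end ExtendByOne

section Homologies

open scoped commutatorElement

variable {F V : Type*} [Field F] [AddCommGroup V] [Module F V]

theorem exists_smul_comm_of_commutator_mem_scalarUnits {a c : (Module.End F V)ˣ}
    (h : ⁅c, a⁆ ∈ scalarUnits F (Module.End F V)) :
    ∃ l : F, ∀ w : V, c • a • w = l • a • c • w := by
  obtain ⟨l, hl⟩ := mem_scalarUnits_iff_exists_smul.1 h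
  refine ⟨l, fun w => ?_⟩
  have hca : c * a = ⁅c, a⁆ * (a * c) := by simp [commutatorElement_def, mul_assoc]
  rw [← mul_smul, ← mul_smul, hca, mul_smul, Units.smul_def ⁅c, a⁆, hl]
  rfl

theorem exists_ne_zero_of_three_le_finrank [Module.Finite F V] (h3 : 3 ≤ Module.finrank F V)
    (φ ψ : V →ₗ[F] F) : ∃ w : V, w ≠ 0 ∧ φ w = 0 ∧ ψ w = 0 := by
  have h := LinearMap.ker_ne_bot_of_finrank_lt (f := φ.prod ψ) (by
    simp only [Module.finrank_prod, Module.finrank_self]; omega)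
  obtain ⟨w, hw, hw0⟩ := Submodule.exists_mem_ne_zero_of_ne_bot h
  exact ⟨w, hw0, congrArg Prod.fst hw, congrArg Prod.snd hw⟩

/-- `s` is the homology with axis `ker φ`, centre `v` and multiplier `ζ`: it fixes `ker φ`
pointwise and multiplies `v` by `ζ`, where `φ v = 1`. Reflections are the case `ζ = -1`. -/
structure IsHomology (s : (Module.End F V)ˣ) (ζ : F) (φ : V →ₗ[F] F) (v : V) : Prop where
  ne_one : ζ ≠ 1
  apply_eq_one : φ v = 1
  smul_eq : ∀ w : V, s • w = w + ((ζ - 1) * φ w) • v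

namespace IsHomology

variable {s : (Module.End F V)ˣ} {ζ : F} {φ : V →ₗ[F] F} {v : V}

theorem ne_zero (hs : IsHomology s ζ φ v) : v ≠ 0 := by
  rintro rfl
  simpa using hs.apply_eq_one

theorem smul_of_apply_eq_zero (hs : IsHomology s ζ φ v) {w : V} (hw : φ w = 0) : s • w = w := by
  rw [hs.smul_eq, hw, mul_zero, zero_smul, add_zero]

theorem smul_center (hs : IsHomology s ζ φ v) : s • v = ζ • v := by
  rw [hs.smul_eq, hs.apply_eq_one]
  module

theorem multiplier_ne_zero (hs : IsHomology s ζ φ v) : ζ ≠ 0 := by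
  rintro rfl
  exact hs.ne_zero ((smul_eq_zero_iff_eq s).1 (hs.smul_center.trans (zero_smul F v)))

theorem inv_smul_eq (hs : IsHomology s ζ φ v) (w : V) :
    s⁻¹ • w = w + ((ζ⁻¹ - 1) * φ w) • v := by
  have := hs.multiplier_ne_zero
  rw [inv_smul_eq_iff, smul_add, smul_comm, hs.smul_eq, hs.smul_center]
  match_scalars <;> field_simp
  ring

theorem inv_smul_of_apply_eq_zero (hs : IsHomology s ζ φ v) {w : V} (hw : φ w = 0) :
    s⁻¹ • w = w := by
  rw [hs.inv_smul_eq, hw, mul_zero, zero_smul, add_zero]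

theorem inv_smul_center (hs : IsHomology s ζ φ v) : s⁻¹ • v = ζ⁻¹ • v := by
  rw [hs.inv_smul_eq, hs.apply_eq_one]
  module

theorem apply_smul_smul_center (hs : IsHomology s ζ φ v) {g : (Module.End F V)ˣ}
    (hg : Commute s g) (w : V) : φ (g • w) • v = φ w • g • v := by
  have h : s • g • w = g • s • w := by rw [← mul_smul, hg.eq, mul_smul]
  rw [hs.smul_eq, hs.smul_eq, smul_add, add_right_inj, mul_smul, mul_smul, smul_comm g,
    smul_comm g] at h
  exact smul_right_injective V (sub_ne_zero.2 hs.ne_one) h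

theorem smul_center_of_commute (hs : IsHomology s ζ φ v) {g : (Module.End F V)ˣ}
    (hg : Commute s g) : g • v = φ (g • v) • v := by
  rw [hs.apply_smul_smul_center hg, hs.apply_eq_one, one_smul]

theorem apply_smul_of_commute (hs : IsHomology s ζ φ v) {g : (Module.End F V)ˣ}
    (hg : Commute s g) (w : V) : φ (g • w) = φ w * φ (g • v) := by
  simpa [hs.apply_eq_one] using congrArg φ (hs.apply_smul_smul_center hg w)

theorem apply_smul_center_ne_zero (hs : IsHomology s ζ φ v) {g : (Module.End F V)ˣ}
    (hg : Commute s g) : φ (g • v) ≠ 0 := by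
  intro h
  have hgv := hs.smul_center_of_commute hg
  rw [h, zero_smul, smul_eq_zero_iff_eq] at hgv
  exact hs.ne_zero hgv

theorem commute_of_commutator_mem_scalarUnits [Module.Finite F V]
    (h3 : 3 ≤ Module.finrank F V) (hs : IsHomology s ζ φ v) {g : (Module.End F V)ˣ}
    (hg : ⁅s, g⁆ ∈ scalarUnits F (Module.End F V)) : Commute s g := by
  obtain ⟨l, hl⟩ := exists_smul_comm_of_commutator_mem_scalarUnits hg
  obtain ⟨w, hw0, hw, hgw⟩ :=
    exists_ne_zero_of_three_le_finrank h3 φ (φ ∘ₗ (g : Module.End F V))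
  have hlw : (1 - l) • g • w = 0 := by
    rw [sub_smul, one_smul, sub_eq_zero]
    have h := hl w
    rwa [hs.smul_of_apply_eq_zero hw, hs.smul_of_apply_eq_zero (w := g • w) hgw] at h
  have hl1 : l = 1 := by
    have h := (smul_eq_zero.1 hlw).resolve_right ((smul_ne_zero_iff_ne g).2 hw0)
    exact (sub_eq_zero.1 h).symm
  refine Units.ext (LinearMap.ext fun x => ?_)
  exact (hl x).trans (by rw [hl1, one_smul]; rfl)

theorem notMem_scalarUnits [Module.Finite F V] (h3 : 3 ≤ Module.finrank F V)
    (hs : IsHomology s ζ φ v) : s ∉ scalarUnits F (Module.End F V) := by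
  intro hsZ
  obtain ⟨c, hc⟩ := mem_scalarUnits_iff_exists_smul.1 hsZ
  have hsc (w : V) : s • w = c • w := LinearMap.congr_fun hc w
  obtain ⟨w, hw0, hw, -⟩ := exists_ne_zero_of_three_le_finrank h3 φ φ
  have hc1 : c = 1 := by
    refine smul_left_injective F hw0 ?_
    simp only [← hsc, hs.smul_of_apply_eq_zero hw, one_smul]
  refine hs.ne_one (smul_left_injective F hs.ne_zero ?_)
  simp only [← hs.smul_center, hsc, hc1]

theorem map_extendByOne {W : Type*} [AddCommGroup W] [Module F W] {u : (Module.End F W)ˣ}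
    {ψ : W →ₗ[F] F} {w : W} (hu : IsHomology u ζ ψ w) {P : W →ₗ[F] V} {Q : V →ₗ[F] W}
    (h : Q ∘ₗ P = LinearMap.id) :
    IsHomology (Units.map (extendByOne P Q h) u) ζ (ψ ∘ₗ Q) (P w) where
  ne_one := hu.ne_one
  apply_eq_one := by
    rw [LinearMap.comp_apply, ← LinearMap.comp_apply Q, h, LinearMap.id_apply, hu.apply_eq_one]
  smul_eq x := by
    have hux : (u : Module.End F W) (Q x) = _ := hu.smul_eq (Q x)
    change extendByOne P Q h u x = _
    rw [extendByOne_apply, hux, add_sub_cancel_left, map_smul, LinearMap.comp_apply]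

theorem units_map_algebraMap {ζ : Fˣ} (hζ : (ζ : F) ≠ 1) :
    IsHomology (Units.map (algebraMap F (Module.End F F) : F →* Module.End F F) ζ) (ζ : F)
      LinearMap.id 1 where
  ne_one := hζ
  apply_eq_one := rfl
  smul_eq w := by
    change (ζ : F) * w = w + (ζ - 1) * w * 1
    ring

end IsHomology

theorem exists_isHomology_mem [Finite F] [Module.Finite F V] [Nontrivial V]
    {H : Subgroup (Module.End F V)ˣ} (hH : ¬ 2 ∣ H.index) {ζ : F} {k : ℕ} (hζ1 : ζ ≠ 1)
    (hζ : ζ ^ 2 ^ k = 1) : ∃ s ∈ H, ∃ φ v, IsHomology s ζ φ v := by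
  have := Fact.mk Nat.prime_two
  let z : Fˣ := Units.ofPowEqOne ζ (2 ^ k) hζ (by positivity)
  let u := Units.map (algebraMap F (Module.End F F) : F →* Module.End F F) z
  obtain ⟨P, Q, h, hu, -⟩ := exists_extendByOne_mem (W := F) (p := 2) (k := k) (l := 0) (u := u)
    (t := 1) (by rw [Module.finrank_self]; exact Module.finrank_pos) hH
    (by rw [← map_pow, Units.pow_ofPowEqOne, map_one]) (one_pow _) (by simp)
  exact ⟨_, hu, _, _, (IsHomology.units_map_algebraMap (ζ := z) hζ1).map_extendByOne h⟩

end Homologies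

section CommutingIdempotents

variable {R : Type*} [Ring R]

/-- There is an idempotent of `R`, neither `0` nor `1`, that commutes with all its conjugates under
`H`. For `R = End V` the conjugates then have a common refinement to a decomposition of `V`. -/
def HasCommutingIdempotent (H : Subgroup Rˣ) : Prop :=
  ∃ e : R, IsIdempotentElem e ∧ e ≠ 0 ∧ e ≠ 1 ∧ ∀ h ∈ H, Commute e (h * e * (h⁻¹ : Rˣ))

variable {F : Type*} [Field F] [Algebra F R]

theorem commute_of_mem_adjoin {S : Set R} (hS : ∀ s ∈ S, ∀ s' ∈ S, Commute s s') {x y : R}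
    (hx : x ∈ Algebra.adjoin F S) (hy : y ∈ Algebra.adjoin F S) : Commute x y :=
  Algebra.commute_of_mem_adjoin_of_forall_mem_commute hy fun s hs =>
    (Algebra.commute_of_mem_adjoin_of_forall_mem_commute hx fun s' hs' => hS s hs s' hs').symm

theorem exists_pow_eq_self_of_mem_adjoin [Finite F] (p : ℕ) [Fact p.Prime] [CharP F p]
    {S : Set R} {m : ℕ} (hm : ¬ p ∣ m) (hSm : ∀ s ∈ S, s ^ m = 1)
    (hS : ∀ s ∈ S, ∀ s' ∈ S, Commute s s') :
    ∃ Q, 2 ≤ Q ∧ ∀ x ∈ Algebra.adjoin F S, x ^ Q = x := by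
  have : Fintype F := Fintype.ofFinite F
  rcases subsingleton_or_nontrivial R with _ | _
  · exact ⟨2, le_rfl, fun x _ => Subsingleton.elim _ _⟩
  have : CharP R p := charP_of_injective_algebraMap (algebraMap F R).injective p
  obtain ⟨k, hp, hk⟩ := FiniteField.card F p
  have hm0 : 0 < m := Nat.pos_of_ne_zero (by rintro rfl; exact hm (dvd_zero p))
  have hcop : (Fintype.card F).Coprime m :=
    hk ▸ Nat.Coprime.pow_left _ (hp.coprime_iff_not_dvd.2 hm)
  refine ⟨Fintype.card F ^ m.totient, ?_, fun x hx => ?_⟩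
  · exact Fintype.one_lt_card.trans_le (Nat.le_self_pow (Nat.totient_pos.2 hm0).ne' _)
  induction hx using Algebra.adjoin_induction with
  | mem s hs => simpa using pow_eq_pow_of_modEq (Nat.ModEq.pow_totient hcop) (hSm s hs)
  | algebraMap c => rw [← map_pow, FiniteField.pow_card_pow]
  | add x y hx hy ihx ihy =>
    rw [hk, ← pow_mul] at ihx ihy ⊢
    rw [add_pow_char_pow_of_commute _ _ (commute_of_mem_adjoin hS hx hy), ihx, ihy]
  | mul x y hx hy ihx ihy => rw [(commute_of_mem_adjoin hS hx hy).mul_pow, ihx, ihy]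

theorem conj_mem_adjoin {S : Set R} {h : Rˣ} (hS : ∀ s ∈ S, h * s * (h⁻¹ : Rˣ) ∈ S) {x : R}
    (hx : x ∈ Algebra.adjoin F S) : h * x * (h⁻¹ : Rˣ) ∈ Algebra.adjoin F S := by
  induction hx using Algebra.adjoin_induction with
  | mem s hs => exact Algebra.subset_adjoin (hS s hs)
  | algebraMap c =>
    rw [← Algebra.commutes, mul_assoc, Units.mul_inv, mul_one]
    exact Subalgebra.algebraMap_mem _ c
  | add x y _ _ ihx ihy =>
    rw [mul_add, add_mul]
    exact add_mem ihx ihy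
  | mul x y _ _ ihx ihy =>
    have hmul : (h : R) * (x * y) * (h⁻¹ : Rˣ) = (h * x * (h⁻¹ : Rˣ)) * (h * y * (h⁻¹ : Rˣ)) := by
      simp [mul_assoc]
    exact hmul ▸ mul_mem ihx ihy

theorem isUnit_of_mem_adjoin_of_not_hasCommutingIdempotent [Finite F] (p : ℕ) [Fact p.Prime]
    [CharP F p] {H B : Subgroup Rˣ} (hp : ¬ p ∣ Nat.card H)
    (hno : ¬ HasCommutingIdempotent H) (hBH : B ≤ H)
    (hHB : H ≤ Subgroup.normalizer (B : Set Rˣ)) (hB : ∀ a ∈ B, ∀ b ∈ B, Commute a b) {x : R}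
    (hx : x ∈ Algebra.adjoin F (Units.val '' (B : Set Rˣ))) (hx0 : x ≠ 0) : IsUnit x := by
  have hcomm : ∀ s ∈ Units.val '' (B : Set Rˣ), ∀ s' ∈ Units.val '' (B : Set Rˣ),
      Commute s s' := by
    rintro _ ⟨a, ha, rfl⟩ _ ⟨b, hb, rfl⟩
    exact Commute.units_val_iff.2 (hB a ha b hb)
  obtain ⟨Q, hQ, hpow⟩ := exists_pow_eq_self_of_mem_adjoin (F := F) p hp (by
    rintro _ ⟨a, ha, rfl⟩
    exact congrArg (fun u : H => ((u : Rˣ) : R))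
      (pow_card_eq_one' (x := (⟨a, hBH ha⟩ : H)))) hcomm
  obtain ⟨k, rfl⟩ := Nat.exists_eq_add_of_le' hQ
  have hex : x ^ (k + 1) * x = x := (pow_succ x (k + 1)).symm.trans (hpow x hx)
  have hidem : IsIdempotentElem (x ^ (k + 1)) := by
    calc x ^ (k + 1) * x ^ (k + 1) = x ^ (k + 1) * x * x ^ k := by rw [mul_assoc, pow_succ' x k]
      _ = x ^ (k + 1) := by rw [hex, pow_succ']
  have hmem : x ^ (k + 1) ∈ Algebra.adjoin F (Units.val '' (B : Set Rˣ)) := pow_mem hx _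
  refine IsUnit.of_pow_eq_one (by_contra fun h1 => hno ⟨_, hidem, ?_, h1, fun h hh => ?_⟩)
    k.succ_ne_zero
  · intro h0
    rw [h0, zero_mul] at hex
    exact hx0 hex.symm
  · refine commute_of_mem_adjoin hcomm hmem (conj_mem_adjoin ?_ hmem)
    rintro _ ⟨b, hb, rfl⟩
    exact ⟨h * b * h⁻¹, (Subgroup.le_normalizer_iff.1 hHB) h hh b hb, by simp⟩

end CommutingIdempotents

section HeisenbergType

open scoped commutatorElement

variable {F V : Type*} [Field F] [AddCommGroup V] [Module F V]

/-- `A` is of Heisenberg type: commutators in `A` are scalar, and so is the centre of `A`. Thus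
the commutator induces a nondegenerate pairing on `A` modulo scalars. -/
structure IsHeisenbergType (A : Subgroup (Module.End F V)ˣ) : Prop where
  commutator_le : ⁅A, A⁆ ≤ scalarUnits F (Module.End F V)
  inf_centralizer_le : A ⊓ Subgroup.centralizer A ≤ scalarUnits F (Module.End F V)

theorem IsHeisenbergType.exists_twist {A : Subgroup (Module.End F V)ˣ} (hA : IsHeisenbergType A)
    {a : (Module.End F V)ˣ} (ha : a ∈ A) (haZ : a ∉ scalarUnits F (Module.End F V)) :
    ∃ c ∈ A, ∃ l : F, l ≠ 1 ∧ ∀ w : V, c • a • w = l • a • c • w := by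
  by_contra! hcon
  refine haZ (hA.inf_centralizer_le ⟨ha, Subgroup.mem_centralizer_iff.2 fun c hc => ?_⟩)
  obtain ⟨l, hl⟩ := exists_smul_comm_of_commutator_mem_scalarUnits
    (hA.commutator_le (Subgroup.commutator_mem_commutator hc ha))
  obtain rfl : l = 1 := by
    by_contra hl1
    obtain ⟨w, hw⟩ := hcon c hc l hl1
    exact hw (hl w)
  exact Units.ext (LinearMap.ext fun x => (hl x).trans (one_smul F _))

variable [Finite F] [Module.Finite F V] (p : ℕ) [Fact p.Prime] [CharP F p]

theorem le_scalarUnits_of_commute (h3 : 3 ≤ Module.finrank F V)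
    {H B : Subgroup (Module.End F V)ˣ} (hp : ¬ p ∣ Nat.card H)
    (hno : ¬ HasCommutingIdempotent H) (hBH : B ≤ H)
    (hHB : H ≤ Subgroup.normalizer (B : Set (Module.End F V)ˣ))
    (hB : ∀ a ∈ B, ∀ b ∈ B, Commute a b) {t : (Module.End F V)ˣ} {ζ : F} {φ : V →ₗ[F] F} {v : V}
    (ht : IsHomology t ζ φ v) (htH : t ∈ H) : B ≤ scalarUnits F (Module.End F V) := by
  intro x hx
  set S := Algebra.adjoin F (Units.val '' (B : Set (Module.End F V)ˣ))
  have eq_zero_of_apply_eq_zero {y : Module.End F V} (hy : y ∈ S) {w : V} (hw : w ≠ 0)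
      (hyw : y w = 0) : y = 0 := by
    by_contra hy0
    obtain ⟨u, rfl⟩ :=
      isUnit_of_mem_adjoin_of_not_hasCommutingIdempotent p hp hno hBH hHB hB hy hy0
    exact hw ((smul_eq_zero_iff_eq u).1 hyw)
  have mem_S {y : (Module.End F V)ˣ} (hy : y ∈ B) : (y : Module.End F V) ∈ S :=
    Algebra.subset_adjoin ⟨y, hy, rfl⟩
  have htx : Commute t x := by
    obtain ⟨w, hw0, hw, hxw⟩ :=
      exists_ne_zero_of_three_le_finrank h3 φ (φ ∘ₗ (x : Module.End F V))
    have hconj : t * x * t⁻¹ = x := by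
      refine Units.ext (sub_eq_zero.1 (eq_zero_of_apply_eq_zero
        (sub_mem (mem_S (Subgroup.le_normalizer_iff.1 hHB t htH x hx)) (mem_S hx)) hw0 ?_))
      change (t * x * t⁻¹) • w - x • w = 0
      rw [mul_smul, mul_smul, ht.inv_smul_of_apply_eq_zero hw,
        ht.smul_of_apply_eq_zero (w := x • w) hxw, sub_self]
    exact mul_inv_eq_iff_eq_mul.1 hconj
  refine mem_scalarUnits_iff_exists_smul.2 ⟨φ (x • v), sub_eq_zero.1
    (eq_zero_of_apply_eq_zero (sub_mem (mem_S hx) (S.smul_mem S.one_mem _)) ht.ne_zero ?_)⟩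
  exact sub_eq_zero.2 (ht.smul_center_of_commute htx)

theorem exists_isHeisenbergType (h3 : 3 ≤ Module.finrank F V)
    {H : Subgroup (Module.End F V)ˣ} (hs : Group.IsSolvable H) (hp : ¬ p ∣ Nat.card H)
    (hno : ¬ HasCommutingIdempotent H) {t : (Module.End F V)ˣ} {ζ : F} {φ : V →ₗ[F] F} {v : V}
    (ht : IsHomology t ζ φ v) (htH : t ∈ H) :
    ∃ A : Subgroup (Module.End F V)ˣ, H ≤ Subgroup.normalizer (A : Set (Module.End F V)ˣ) ∧
      ¬ A ≤ scalarUnits F (Module.End F V) ∧ IsHeisenbergType A := by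
  obtain ⟨A, hAH, hAZ, hAA, hHA⟩ :=
    exists_last_derived_term hs fun h => ht.notMem_scalarUnits h3 (h htH)
  have hHA' := Subgroup.le_normalizer.trans hHA
  refine ⟨A, hHA', hAZ, hAA, ?_⟩
  refine le_scalarUnits_of_commute p h3 hp hno (inf_le_left.trans hAH)
    (le_inf hHA' (hHA'.trans (normalizer_le_normalizer_centralizer _)) |>.trans
      Subgroup.inf_normalizer_le_normalizer_inf) (fun a ha b hb => ?_) ht htH
  exact Subgroup.mem_centralizer_iff.1 hb.2 a ha.1

end HeisenbergType

section HomologyCommutators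

open scoped commutatorElement

variable {F V : Type*} [Field F] [AddCommGroup V] [Module F V]

theorem finrank_eigenspace_le_of_twist [Module.Finite F V] {b c : (Module.End F V)ˣ} {m : F}
    (h : ∀ w : V, b • c • w = m • c • b • w) (ν : F) :
    Module.finrank F (Module.End.eigenspace (b : Module.End F V) ν) ≤
      Module.finrank F (Module.End.eigenspace (b : Module.End F V) (m * ν)) := by
  have hc : Function.Injective (c : Module.End F V) := MulAction.injective c
  rw [(Submodule.equivMapOfInjective _ hc _).finrank_eq]
  refine Submodule.finrank_mono ?_
  rintro _ ⟨w, hw, rfl⟩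
  rw [Module.End.mem_eigenspace_iff]
  have hbw : b • w = ν • w := Module.End.mem_eigenspace_iff.1 hw
  exact (h w).trans (by rw [hbw, smul_comm c, mul_smul]; rfl)

variable {s a : (Module.End F V)ˣ} {ζ : F} {φ : V →ₗ[F] F} {v : V}

namespace IsHomology

theorem finrank_le_finrank_eigenspace_commutator [Module.Finite F V] (hs : IsHomology s ζ φ v) :
    Module.finrank F V ≤
      Module.finrank F (Module.End.eigenspace (⁅s, a⁆ : (Module.End F V)ˣ).val 1) + 2 := by
  let f := φ.prod (φ ∘ₗ (↑a⁻¹ : Module.End F V))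
  have hrange : Module.finrank F f.range ≤ 2 :=
    (Submodule.finrank_le _).trans (by simp [Module.finrank_prod])
  have hker : LinearMap.ker f ≤ Module.End.eigenspace (⁅s, a⁆ : (Module.End F V)ˣ).val 1 := by
    intro w hw
    have h1 : φ w = 0 := congrArg Prod.fst hw
    have h2 : φ (a⁻¹ • w) = 0 := congrArg Prod.snd hw
    rw [Module.End.mem_eigenspace_iff, one_smul]
    change (s * a * s⁻¹ * a⁻¹) • w = w
    rw [mul_smul, mul_smul, mul_smul, hs.inv_smul_of_apply_eq_zero h2, smul_inv_smul,
      hs.smul_of_apply_eq_zero h1]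
  have h := f.finrank_range_add_finrank_ker
  have := Submodule.finrank_mono hker
  omega

theorem eigenspace_commutator_le_span (hs : IsHomology s ζ φ v) {m : F} (hm : m ≠ 1) :
    Module.End.eigenspace (⁅s, a⁆ : (Module.End F V)ˣ).val m ≤ Submodule.span F {v, a • v} := by
  intro w hw
  let x := (ζ⁻¹ - 1) * φ (a⁻¹ • w)
  have hmw : m • w = (s * a * s⁻¹ * a⁻¹) • w := (Module.End.mem_eigenspace_iff.1 hw).symm
  have hv : v ∈ Submodule.span F {v, a • v} := Submodule.subset_span (by simp)
  have hav : a • v ∈ Submodule.span F {v, a • v} := Submodule.subset_span (by simp)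
  rw [mul_smul, mul_smul, mul_smul, hs.inv_smul_eq, smul_add, smul_inv_smul, hs.smul_eq,
    smul_comm a] at hmw
  have h : (m - 1) • w = x • a • v + ((ζ - 1) * φ (w + x • a • v)) • v := by
    rw [sub_smul, hmw, one_smul]
    abel
  rw [← inv_smul_smul₀ (sub_ne_zero.2 hm) w, h]
  exact Submodule.smul_mem _ _ (add_mem (Submodule.smul_mem _ _ hav) (Submodule.smul_mem _ _ hv))

end IsHomology

namespace IsHeisenbergType

variable {A : Subgroup (Module.End F V)ˣ}

theorem exists_not_commute (hA : IsHeisenbergType A)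
    (hAZ : ¬ A ≤ scalarUnits F (Module.End F V)) (hs : IsHomology s ζ φ v) :
    ∃ a ∈ A, ¬ Commute s a := by
  by_contra! hcomm
  obtain ⟨a, ha, haZ⟩ := SetLike.not_le_iff_exists.1 hAZ
  obtain ⟨c, hc, l, hl1, hl⟩ := hA.exists_twist ha haZ
  have h := hl v
  have hac := mul_ne_zero (hs.apply_smul_center_ne_zero (hcomm a ha))
    (hs.apply_smul_center_ne_zero (hcomm c hc))
  rw [hs.smul_center_of_commute (hcomm a ha), smul_comm c,
    hs.smul_center_of_commute (hcomm c hc), smul_comm a,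
    hs.smul_center_of_commute (hcomm a ha)] at h
  have h1 := congrArg φ h
  simp only [map_smul, smul_eq_mul, hs.apply_eq_one, mul_one] at h1
  exact hl1 (mul_right_cancel₀ hac (by linear_combination -h1))

variable [Module.Finite F V]

theorem exists_twist_commutator (h3 : 3 ≤ Module.finrank F V) (hA : IsHeisenbergType A)
    (hs : IsHomology s ζ φ v) (hsA : s ∈ Subgroup.normalizer (A : Set (Module.End F V)ˣ))
    (ha : a ∈ A) (hsa : ¬ Commute s a) :
    ∃ c ∈ A, ∃ m : F, m ≠ 0 ∧ m ≠ 1 ∧ ∀ w : V, ⁅s, a⁆ • c • w = m • c • ⁅s, a⁆ • w := by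
  have hb : ⁅s, a⁆ ∈ A := A.mul_mem ((Subgroup.mem_normalizer_iff.1 hsA a).1 ha) (A.inv_mem ha)
  obtain ⟨c, hc, l, hl1, hl⟩ :=
    hA.exists_twist hb fun h => hsa (hs.commute_of_commutator_mem_scalarUnits h3 h)
  have hl0 : l ≠ 0 := by
    rintro rfl
    have h := hl v
    rw [zero_smul, smul_eq_zero_iff_eq, smul_eq_zero_iff_eq] at h
    exact hs.ne_zero h
  exact ⟨c, hc, l⁻¹, inv_ne_zero hl0, inv_ne_one.2 hl1, fun w => by
    rw [hl, inv_smul_smul₀ hl0]⟩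

theorem finrank_le_four (h3 : 3 ≤ Module.finrank F V) (hA : IsHeisenbergType A)
    (hs : IsHomology s ζ φ v) (hsA : s ∈ Subgroup.normalizer (A : Set (Module.End F V)ˣ))
    (ha : a ∈ A) (hsa : ¬ Commute s a) : Module.finrank F V ≤ 4 := by
  obtain ⟨c, -, m, -, hm1, hm⟩ := hA.exists_twist_commutator h3 hs hsA ha hsa
  have h1 := hs.finrank_le_finrank_eigenspace_commutator (a := a)
  have h2 := finrank_eigenspace_le_of_twist hm 1
  rw [mul_one] at h2
  have hdisj : Disjoint (Module.End.eigenspace (⁅s, a⁆ : (Module.End F V)ˣ).val 1)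
      (Module.End.eigenspace _ m) := Module.End.disjoint_genEigenspace _ hm1.symm 1 1
  have h3 := Submodule.finrank_add_finrank_le_of_disjoint hdisj
  omega

theorem exists_anticommute_of_finrank_eq_four (h4 : Module.finrank F V = 4)
    (hA : IsHeisenbergType A) (hs : IsHomology s ζ φ v)
    (hsA : s ∈ Subgroup.normalizer (A : Set (Module.End F V)ˣ)) (ha : a ∈ A)
    (hsa : ¬ Commute s a) : ∃ c ∈ A, ∀ w : V, ⁅s, a⁆ • c • w = -(c • ⁅s, a⁆ • w) := by
  obtain ⟨c, hc, m, hm0, hm1, hm⟩ := hA.exists_twist_commutator (by omega) hs hsA ha hsa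
  suffices hm2 : m ^ 2 = 1 by
    obtain rfl : m = -1 := (sq_eq_one_iff.1 hm2).resolve_left hm1
    exact ⟨c, hc, fun w => by rw [hm, neg_one_smul]⟩
  by_contra hm2
  let E (ν : F) := Module.End.eigenspace (⁅s, a⁆ : (Module.End F V)ˣ).val ν
  have h1 : 2 ≤ Module.finrank F (E 1) := by
    have : _ ≤ Module.finrank F (E 1) + 2 := hs.finrank_le_finrank_eigenspace_commutator
    omega
  have h2 : 2 ≤ Module.finrank F (E m) := by
    have h := finrank_eigenspace_le_of_twist hm 1
    rw [mul_one] at h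
    exact h1.trans h
  have h3 : 2 ≤ Module.finrank F (E (m * m)) := h2.trans (finrank_eigenspace_le_of_twist hm m)
  have htop : E 1 ⊔ E m = ⊤ := by
    have hdisj : Disjoint (E 1) (E m) := Module.End.disjoint_genEigenspace _ hm1.symm 1 1
    have h := Submodule.finrank_sup_add_finrank_inf_eq (E 1) (E m)
    rw [hdisj.eq_bot, finrank_bot] at h
    exact Submodule.eq_top_of_finrank_eq (le_antisymm (Submodule.finrank_le _) (by omega))
  have hbot : E (m * m) = ⊥ := by
    refine disjoint_top.1 (htop ▸ (Module.End.eigenspaces_iSupIndep _ (m * m)).mono_right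
      (sup_le ?_ ?_))
    · exact le_iSup₂_of_le 1 (by simpa [sq] using Ne.symm hm2) le_rfl
    · exact le_iSup₂_of_le m (fun h => hm1 (mul_left_cancel₀ hm0 (by rw [← h, mul_one]))) le_rfl
  rw [hbot, finrank_bot] at h3
  omega

theorem eq_neg_one_and_apply_smul_eq_zero (h2 : (2 : F) ≠ 0) (h4 : Module.finrank F V = 4)
    (hA : IsHeisenbergType A) (hs : IsHomology s ζ φ v)
    (hsA : s ∈ Subgroup.normalizer (A : Set (Module.End F V)ˣ)) (ha : a ∈ A)
    (hsa : ¬ Commute s a) : ζ = -1 ∧ φ (a⁻¹ • v) = 0 := by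
  obtain ⟨c, -, hc⟩ := hA.exists_anticommute_of_finrank_eq_four h4 hs hsA ha hsa
  let b : (Module.End F V)ˣ := ⁅s, a⁆
  have hspan : Module.End.eigenspace b.val (-1) = Submodule.span F {v, a • v} := by
    refine Submodule.eq_of_le_of_finrank_le
      (hs.eigenspace_commutator_le_span fun h => h2 (by linear_combination -h)) ?_
    have h1 : _ ≤ Module.finrank F (Module.End.eigenspace b.val 1) + 2 :=
      hs.finrank_le_finrank_eigenspace_commutator
    have h1' := finrank_eigenspace_le_of_twist (m := (-1 : F)) (b := b) (by simpa using hc) 1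
    have : Module.finrank F (Submodule.span F {v, a • v}) ≤ 2 := by
      classical
      exact_mod_cast (finrank_span_finset_le_card (R := F) {v, a • v}).trans Finset.card_le_two
    rw [mul_one] at h1'
    omega
  have hbv : b • v = -v := by
    have hv : v ∈ Module.End.eigenspace b.val (-1) := hspan ▸ Submodule.subset_span (by simp)
    exact (Module.End.mem_eigenspace_iff.1 hv).trans (neg_one_smul F v)
  have hx : a⁻¹ • v + ((ζ⁻¹ - 1) * φ (a⁻¹ • v)) • v = -(ζ⁻¹ • a⁻¹ • v) := by
    have hb : s * a * s⁻¹ * a⁻¹ = b := rfl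
    rw [← hs.inv_smul_eq, ← mul_smul, show s⁻¹ * a⁻¹ = a⁻¹ * s⁻¹ * b by rw [← hb]; group,
      mul_smul, hbv, mul_smul, smul_neg, smul_neg, hs.inv_smul_center, smul_comm]
  have hφ : φ (a⁻¹ • v) = 0 := by
    have h := congrArg φ hx
    simp only [map_add, map_neg, map_smul, smul_eq_mul, hs.apply_eq_one] at h
    have : 2 * ζ⁻¹ * φ (a⁻¹ • v) = 0 := by linear_combination h
    simpa [h2, hs.multiplier_ne_zero] using this
  refine ⟨inv_injective ?_, hφ⟩
  rw [hφ, mul_zero, zero_smul, add_zero, ← neg_smul] at hx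
  have h := smul_left_injective F ((smul_ne_zero_iff_ne a⁻¹).2 hs.ne_zero)
    ((one_smul F (a⁻¹ • v)).trans hx)
  rw [inv_neg_one]
  linear_combination h

end IsHeisenbergType

end HomologyCommutators

section FourDimensional

open scoped commutatorElement

variable {F V : Type*} [Field F] [AddCommGroup V] [Module F V]

theorem IsHomology.commutator_smul_of_apply_smul_eq_zero {t a : (Module.End F V)ˣ}
    {φ : V →ₗ[F] F} {v : V} (ht : IsHomology t (-1) φ v) (ha : φ (a • v) = 0) (w : V) :
    ⁅t, a⁆ • w = w - (2 : F) • (φ w • v + φ (a⁻¹ • w) • a • v) := by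
  change (t * a * t⁻¹ * a⁻¹) • w = _
  rw [mul_smul, mul_smul, mul_smul, ht.inv_smul_eq, smul_add, smul_inv_smul, smul_comm a (_ : F),
    ht.smul_eq, map_add, φ.map_smul, ha, inv_neg_one]
  generalize a • v = y
  module

namespace IsHeisenbergType

variable [Module.Finite F V] {A : Subgroup (Module.End F V)ˣ}
  {t t' a : (Module.End F V)ˣ} {ζ : F} {φ φ' : V →ₗ[F] F} {v v' : V}

theorem apply_smul_eq_zero (h2 : (2 : F) ≠ 0) (h4 : Module.finrank F V = 4)
    (hA : IsHeisenbergType A) (ht : IsHomology t ζ φ v)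
    (htA : t ∈ Subgroup.normalizer (A : Set (Module.End F V)ˣ)) (ha : a ∈ A)
    (hta : ¬ Commute t a) : φ (a • v) = 0 := by
  simpa using (hA.eq_neg_one_and_apply_smul_eq_zero h2 h4 ht htA (A.inv_mem ha)
    (by rwa [Commute.inv_right_iff])).2

theorem apply_smul_mul_apply_inv_smul (h2 : (2 : F) ≠ 0) (h4 : Module.finrank F V = 4)
    (hA : IsHeisenbergType A) (ht : IsHomology t ζ φ v)
    (htA : t ∈ Subgroup.normalizer (A : Set (Module.End F V)ˣ)) (ha : a ∈ A) :
    φ (a • v) * φ (a⁻¹ • v) = 0 ∧ ¬ Commute t a ∨ φ (a • v) * φ (a⁻¹ • v) = 1 := by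
  by_cases hta : Commute t a
  · right
    rw [mul_comm, ← ht.apply_smul_of_commute hta, smul_inv_smul, ht.apply_eq_one]
  · exact Or.inl ⟨by rw [hA.apply_smul_eq_zero h2 h4 ht htA ha hta, zero_mul], hta⟩

theorem exists_conj_resolution (h2 : (2 : F) ≠ 0) (h4 : Module.finrank F V = 4)
    (hA : IsHeisenbergType A) (ht : IsHomology t (-1) φ v)
    (htA : t ∈ Subgroup.normalizer (A : Set (Module.End F V)ˣ)) (ha : a ∈ A)
    (hta : ¬ Commute t a) : ∃ c ∈ A, ∀ w : V, w = φ w • v + φ (a⁻¹ • w) • a • v +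
      φ (c⁻¹ • w) • c • v + φ ((c * a)⁻¹ • w) • (c * a) • v := by
  obtain ⟨c, hc, hca⟩ := hA.exists_anticommute_of_finrank_eq_four h4 ht htA ha hta
  refine ⟨c, hc, fun w => ?_⟩
  have hb := ht.commutator_smul_of_apply_smul_eq_zero (hA.apply_smul_eq_zero h2 h4 ht htA ha hta)
  have h := hca (c⁻¹ • w)
  simp only [smul_inv_smul, hb, smul_sub, smul_add, smul_comm c (_ : F)] at h
  rw [_root_.mul_inv_rev, mul_smul, mul_smul]
  generalize φ w • v = x₀, φ (a⁻¹ • w) • a • v = x₁, φ (c⁻¹ • w) • c • v = x₂,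
    φ (a⁻¹ • c⁻¹ • w) • c • a • v = x₃ at h ⊢
  exact smul_right_injective V h2 (by linear_combination (norm := module) h)

theorem overlap_cases (h2 : (2 : F) ≠ 0) (h4 : Module.finrank F V = 4)
    (hA : IsHeisenbergType A) (ht : IsHomology t (-1) φ v) (ht' : IsHomology t' (-1) φ' v')
    (htA : t ∈ Subgroup.normalizer (A : Set (Module.End F V)ˣ))
    (htA' : t' ∈ Subgroup.normalizer (A : Set (Module.End F V)ˣ)) (hφv' : φ v' = 0)
    (ha : a ∈ A) (hta : ¬ Commute t a) :
    2 * (φ' (a • v) * φ (a⁻¹ • v')) = 1 ∨ φ' (a • v) * φ (a⁻¹ • v') = 1 ∨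
      φ' (a • v) = 0 ∧ φ (a⁻¹ • v') = 0 := by
  have hav := hA.apply_smul_eq_zero h2 h4 ht htA ha hta
  have hd := ht.commutator_smul_of_apply_smul_eq_zero hav
  have hdA : ⁅t, a⁆ ∈ A := A.mul_mem ((Subgroup.mem_normalizer_iff.1 htA a).1 ha) (A.inv_mem ha)
  have hdv' : φ' (⁅t, a⁆ • v') = 1 - 2 * (φ' (a • v) * φ (a⁻¹ • v')) := by
    simp only [hd, hφv', map_sub, φ'.map_smul, smul_eq_mul, ht'.apply_eq_one, zero_smul, zero_add]
    ring
  by_cases htd : Commute t' ⁅t, a⁆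
  · have hav' := ht'.apply_smul_of_commute htd (a • v)
    have hav'' : ⁅t, a⁆ • a • v = -(a • v) := by
      rw [hd, hav, inv_smul_smul, ht.apply_eq_one]
      generalize a • v = y
      module
    have hv' := ht'.smul_center_of_commute htd
    rw [hdv', hd, hφv', zero_smul, zero_add] at hv'
    have hx : φ (a⁻¹ • v') • a • v = (φ' (a • v) * φ (a⁻¹ • v')) • v' := by
      generalize a • v = y at hv' ⊢
      exact smul_right_injective V h2 (by linear_combination (norm := module) -hv')
    have hx' := congrArg (fun x => φ (a⁻¹ • x)) hx
    simp only [smul_comm a⁻¹ (_ : F), inv_smul_smul, φ.map_smul, smul_eq_mul, ht.apply_eq_one]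
      at hx'
    rw [hav'', hdv', map_neg] at hav'
    refine Or.inr (or_iff_not_imp_left.2 fun hκ => ?_)
    have h0 : φ (a⁻¹ • v') = 0 := by
      have : (φ' (a • v) * φ (a⁻¹ • v') - 1) * φ (a⁻¹ • v') = 0 := by linear_combination -hx'
      exact (mul_eq_zero.1 this).resolve_left (sub_ne_zero.2 hκ)
    rw [h0] at hav'
    exact ⟨(mul_eq_zero.1 (by linear_combination -hav' : 2 * φ' (a • v) = 0)).resolve_left h2, h0⟩
  · rw [hA.apply_smul_eq_zero h2 h4 ht' htA' hdA htd] at hdv'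
    exact Or.inl (sub_eq_zero.1 hdv'.symm).symm

theorem overlap_of_rotation (h2 : (2 : F) ≠ 0) (h4 : Module.finrank F V = 4)
    (hA : IsHeisenbergType A) (ht : IsHomology t (-1) φ v) (ht' : IsHomology t' (-1) φ' v')
    (htA : t ∈ Subgroup.normalizer (A : Set (Module.End F V)ˣ))
    (htA' : t' ∈ Subgroup.normalizer (A : Set (Module.End F V)ˣ)) (hφv' : φ v' = 0)
    {g : (Module.End F V)ˣ} (hgA : g ∈ Subgroup.normalizer (A : Set (Module.End F V)ˣ))
    (hfix : ∀ x, φ x = 0 → φ' x = 0 → g • x = x)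
    (hmove : ∀ x, ∃ α β : F, g • x = x + α • v + β • v')
    (hg : 2 * (φ (g • v) * φ (g⁻¹ • v)) = 1) (ha : a ∈ A) (hta : ¬ Commute t a) :
    2 * (φ' (a • v) * φ (a⁻¹ • v')) = 1 ∨ φ' (a • v) * φ (a⁻¹ • v') = 1 := by
  refine (or_assoc.2 (hA.overlap_cases h2 h4 ht ht' htA htA' hφv' ha hta)).resolve_right ?_
  rintro ⟨h0, h0'⟩
  have hta' : ¬ Commute t a⁻¹ := by rwa [Commute.inv_right_iff]
  let d := g * a⁻¹ * g⁻¹ * a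
  have hd : d ∈ A :=
    A.mul_mem ((Subgroup.mem_normalizer_iff.1 hgA _).1 (A.inv_mem ha)) ha
  have hdv : d • v = g • v := by
    have hgav : g⁻¹ • a • v = a • v :=
      inv_smul_eq_iff.2 (hfix _ (hA.apply_smul_eq_zero h2 h4 ht htA ha hta) h0).symm
    simp only [d, mul_smul, hgav, inv_smul_smul]
  have hdv' : φ (d⁻¹ • v) = φ (g⁻¹ • v) := by
    obtain ⟨α, β, hαβ⟩ := hmove (a • g⁻¹ • v)
    have hdinv : d⁻¹ = a⁻¹ * g * a * g⁻¹ := by simp only [d]; group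
    simp only [hdinv, mul_smul, hαβ, smul_add, smul_comm a⁻¹ (_ : F), map_add, φ.map_smul, h0',
      hA.apply_smul_eq_zero h2 h4 ht htA (A.inv_mem ha) hta', inv_smul_smul, smul_zero, add_zero]
  have hpair := hA.apply_smul_mul_apply_inv_smul h2 h4 ht htA hd
  rw [hdv, hdv'] at hpair
  rcases hpair with ⟨h, -⟩ | h
  · exact one_ne_zero (by linear_combination -hg + 2 * h : (1 : F) = 0)
  · exact one_ne_zero (by linear_combination hg - 2 * h : (1 : F) = 0)

theorem false_of_rotation (h2 : (2 : F) ≠ 0) (h3 : (3 : F) ≠ 0) (h4 : Module.finrank F V = 4)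
    (hA : IsHeisenbergType A) (hAZ : ¬ A ≤ scalarUnits F (Module.End F V))
    (ht : IsHomology t (-1) φ v) (ht' : IsHomology t' (-1) φ' v')
    (htA : t ∈ Subgroup.normalizer (A : Set (Module.End F V)ˣ))
    (htA' : t' ∈ Subgroup.normalizer (A : Set (Module.End F V)ˣ)) (hφv' : φ v' = 0)
    (hφ'v : φ' v = 0) {g : (Module.End F V)ˣ}
    (hgA : g ∈ Subgroup.normalizer (A : Set (Module.End F V)ˣ))
    (hfix : ∀ x, φ x = 0 → φ' x = 0 → g • x = x)
    (hmove : ∀ x, ∃ α β : F, g • x = x + α • v + β • v')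
    (hg : 2 * (φ (g • v) * φ (g⁻¹ • v)) = 1) : False := by
  have overlap {a : (Module.End F V)ˣ} (ha : a ∈ A) (hta : ¬ Commute t a) :=
    hA.overlap_of_rotation h2 h4 ht ht' htA htA' hφv' hgA hfix hmove hg ha hta
  obtain ⟨a, ha, hta⟩ := hA.exists_not_commute hAZ ht
  obtain ⟨c, hc, hsum⟩ := hA.exists_conj_resolution h2 h4 ht htA ha hta
  have hv := congrArg φ (hsum v)
  simp only [map_add, φ.map_smul, smul_eq_mul, ht.apply_eq_one,
    hA.apply_smul_eq_zero h2 h4 ht htA ha hta] at hv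
  have hv' := congrArg φ' (hsum v')
  simp only [map_add, φ'.map_smul, smul_eq_mul, ht'.apply_eq_one, hφv', hφ'v] at hv'
  obtain ⟨htc, htca⟩ : ¬ Commute t c ∧ ¬ Commute t (c * a) := by
    rcases hA.apply_smul_mul_apply_inv_smul h2 h4 ht htA hc with ⟨h, htc⟩ | h <;>
    rcases hA.apply_smul_mul_apply_inv_smul h2 h4 ht htA (A.mul_mem hc ha) with ⟨h', htca⟩ | h'
    · exact ⟨htc, htca⟩
    · exact (one_ne_zero (by linear_combination -hv - h - h' : (1 : F) = 0)).elim
    · exact (one_ne_zero (by linear_combination -hv - h - h' : (1 : F) = 0)).elim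
    · exact (h2 (by linear_combination -hv - h - h')).elim
  have h1 : (1 : F) ≠ 0 := one_ne_zero
  rcases overlap ha hta with hκ | hκ <;> rcases overlap hc htc with hκ' | hκ' <;>
    rcases overlap (A.mul_mem hc ha) htca with hκ'' | hκ''
  · exact h1 (by linear_combination -2 * hv' - hκ - hκ' - hκ'')
  · exact h2 (by linear_combination -2 * hv' - hκ - hκ' - 2 * hκ'')
  · exact h2 (by linear_combination -2 * hv' - hκ - 2 * hκ' - hκ'')
  · exact h3 (by linear_combination -2 * hv' - hκ - 2 * hκ' - 2 * hκ'')
  · exact h2 (by linear_combination -2 * hv' - 2 * hκ - hκ' - hκ'')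
  · exact h3 (by linear_combination -2 * hv' - 2 * hκ - hκ' - 2 * hκ'')
  · exact h3 (by linear_combination -2 * hv' - 2 * hκ - 2 * hκ' - hκ'')
  · exact h2 (by linear_combination -hv' - hκ - hκ' - hκ'')

end IsHeisenbergType

end FourDimensional

section DiagonalUnits

variable {F ι : Type*} [Field F]

/-- The diagonal automorphisms of `ι → F`. -/
def diagonalUnits (F ι : Type*) [Field F] : (ι → Fˣ) →* (Module.End F (ι → F))ˣ :=
  (Units.map (Algebra.lmul F (ι → F) : (ι → F) →* Module.End F (ι → F))).comp
    MulEquiv.piUnits.symm.toMonoidHom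

theorem diagonalUnits_smul (d : ι → Fˣ) (x : ι → F) (i : ι) :
    (diagonalUnits F ι d • x) i = d i * x i := rfl

theorem isHomology_diagonalUnits_mulSingle [DecidableEq ι] (i : ι) {ζ : Fˣ} (hζ : (ζ : F) ≠ 1) :
    IsHomology (diagonalUnits F ι (Pi.mulSingle i ζ)) (ζ : F) (LinearMap.proj i)
      (Pi.single i 1) where
  ne_one := hζ
  apply_eq_one := Pi.single_eq_same i 1
  smul_eq w := by
    ext j
    rw [diagonalUnits_smul]
    rcases eq_or_ne j i with rfl | hij
    · simp only [Pi.mulSingle_eq_same, LinearMap.proj_apply, Pi.add_apply, Pi.smul_apply,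
        Pi.single_eq_same, smul_eq_mul]
      ring
    · simp [hij]

theorem neg_diagonalUnits_mulSingle_zero :
    -diagonalUnits F (Fin 2) (Pi.mulSingle 0 (-1)) =
      diagonalUnits F (Fin 2) (Pi.mulSingle 1 (-1)) := by
  refine Units.ext (LinearMap.ext fun x => funext fun i => ?_)
  change -(diagonalUnits F (Fin 2) (Pi.mulSingle 0 (-1)) • x) i = _ * x i
  rw [diagonalUnits_smul]
  fin_cases i <;> simp

theorem diagonalUnits_mulSingle_zero_mul_one :
    diagonalUnits F (Fin 3) (Pi.mulSingle 0 (-1)) * diagonalUnits F (Fin 3) (Pi.mulSingle 1 (-1)) =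
      -diagonalUnits F (Fin 3) (Pi.mulSingle 2 (-1)) := by
  rw [← map_mul]
  refine Units.ext (LinearMap.ext fun x => funext fun i => ?_)
  change _ * x i = -(diagonalUnits F (Fin 3) (Pi.mulSingle 2 (-1)) • x) i
  rw [diagonalUnits_smul]
  fin_cases i <;> simp

end DiagonalUnits

section Rotation

variable {F : Type*} [Field F]

theorem exists_two_mul_sq_sq_eq_one [Finite F] (h : ¬ IsSquare (-1 : F)) :
    ∃ s : F, (2 * s ^ 2) ^ 2 = 1 := by
  have : Fintype F := Fintype.ofFinite F
  classical
  have hF : ringChar F ≠ 2 := fun h' => h (FiniteField.isSquare_of_char_two h' _)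
  have h2 : (2 : F) ≠ 0 := Ring.two_ne_zero hF
  suffices IsSquare (2 : F) ∨ IsSquare (-2 : F) by
    rcases this with ⟨r, hr⟩ | ⟨r, hr⟩
    · exact ⟨r / 2, by field_simp; linear_combination (-2 - r * r) * hr⟩
    · exact ⟨r / 2, by field_simp; linear_combination (2 - r * r) * hr⟩
  rw [or_iff_not_imp_left]
  intro hsq
  refine (quadraticChar_one_iff_isSquare (neg_ne_zero.2 h2)).1 ?_
  rw [← neg_one_mul, map_mul, quadraticChar_neg_one_iff_not_isSquare.2 h,
    quadraticChar_neg_one_iff_not_isSquare.2 hsq]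
  norm_num

theorem conj_mem_zpowers_of_mul_mul_eq {G : Type*} [Group G] [HasDistribNeg G] {u t : G}
    (hu : u ^ 4 = -1) (h : u * t * u = t ∨ u * t * u = -t) :
    t * u * t⁻¹ ∈ Subgroup.zpowers u := by
  rcases h with h | h
  · have htu : t * u * t⁻¹ = u⁻¹ := by
      rw [mul_inv_eq_iff_eq_mul, eq_inv_mul_iff_mul_eq, ← mul_assoc, h]
    exact htu ▸ inv_mem (Subgroup.mem_zpowers u)
  · have htu : t * u * t⁻¹ = u ^ 3 := by
      rw [mul_inv_eq_iff_eq_mul, ← mul_right_inj u, ← mul_assoc, h, ← mul_assoc, ← pow_succ', hu,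
        neg_one_mul]
    exact htu ▸ Subgroup.npow_mem_zpowers u 3

theorem exists_rotation [Finite F] (h : ¬ IsSquare (-1 : F)) :
    ∃ u : (Module.End F (Fin 2 → F))ˣ, u ^ 4 = -1 ∧
      diagonalUnits F (Fin 2) (Pi.mulSingle 0 (-1)) * u *
        (diagonalUnits F (Fin 2) (Pi.mulSingle 0 (-1)))⁻¹ ∈ Subgroup.zpowers u ∧
      2 * ((u • (Pi.single 0 1 : Fin 2 → F)) 0 * (u⁻¹ • (Pi.single 0 1 : Fin 2 → F)) 0) = 1 := by
  obtain ⟨s, hs⟩ := exists_two_mul_sq_sq_eq_one h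
  let M : Matrix (Fin 2) (Fin 2) F := !![-s, -s; s, -s]
  let N : Matrix (Fin 2) (Fin 2) F := (2 * s ^ 2) • !![-s, s; -s, -s]
  have hMN : M * N = 1 := by
    ext i j
    fin_cases i <;> fin_cases j <;> simp [M, N, Matrix.mul_apply, Fin.sum_univ_two] <;>
      linear_combination hs
  let u : (Module.End F (Fin 2 → F))ˣ := Units.mapEquiv Matrix.toLinAlgEquiv'.toMulEquiv
    ⟨M, N, hMN, mul_eq_one_comm.1 hMN⟩
  set t := diagonalUnits F (Fin 2) (Pi.mulSingle 0 (-1))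
  have hu2 (x : Fin 2 → F) : u • u • x = (2 * s ^ 2) • ![x 1, - x 0] := by
    change M *ᵥ M *ᵥ x = _
    ext i
    fin_cases i <;> simp [M, Matrix.mulVec, Fin.sum_univ_two, dotProduct] <;> ring
  have hu4 : u ^ 4 = -1 := by
    refine Units.ext (LinearMap.ext fun x => ?_)
    change u • u • u • u • x = -x
    rw [hu2, hu2]
    ext i
    fin_cases i <;> simp [← mul_assoc, ← sq, hs]
  have hutu (x : Fin 2 → F) : u • t • u • x = (2 * s ^ 2) • t • x := by
    change M *ᵥ (t • (M *ᵥ x)) = _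
    ext i
    fin_cases i <;>
      simp [M, t, Matrix.mulVec, Fin.sum_univ_two, dotProduct, diagonalUnits_smul] <;> ring
  refine ⟨u, hu4, conj_mem_zpowers_of_mul_mul_eq hu4 ((sq_eq_one_iff.1 hs).imp (fun hε => ?_)
    fun hε => ?_), ?_⟩
  · exact Units.ext (LinearMap.ext fun x => (hutu x).trans (by rw [hε, one_smul]; rfl))
  · exact Units.ext (LinearMap.ext fun x => (hutu x).trans (by rw [hε, neg_one_smul]; rfl))
  · change 2 * ((M *ᵥ Pi.single 0 1) 0 * (N *ᵥ Pi.single 0 1) 0) = 1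
    simp [M, N]
    linear_combination hs

end Rotation

section ExistsCommutingIdempotent

open scoped commutatorElement

variable {F V : Type*} [Field F] [AddCommGroup V] [Module F V]
  [Module.Finite F V] {A H : Subgroup (Module.End F V)ˣ}

namespace IsHeisenbergType

theorem two_dvd_index_of_isSquare_neg_one [Finite F] (h2 : (2 : F) ≠ 0) (hsq : IsSquare (-1 : F))
    (h4 : Module.finrank F V = 4) (hA : IsHeisenbergType A)
    (hAZ : ¬ A ≤ scalarUnits F (Module.End F V))
    (hHA : H ≤ Subgroup.normalizer (A : Set (Module.End F V)ˣ)) : 2 ∣ H.index := by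
  have : Nontrivial V := Module.nontrivial_of_finrank_pos (R := F) (by omega)
  have := Fact.mk Nat.prime_two
  by_contra hH
  have h11 : (-1 : F) ≠ 1 := fun h => h2 (by linear_combination -h)
  obtain ⟨i, hi⟩ := hsq
  have hi1 : i ≠ 1 := by
    rintro rfl
    exact h11 (by simpa using hi)
  obtain ⟨s, hsH, φ, v, hs⟩ := exists_isHomology_mem (V := V) hH (k := 2) hi1
    (by linear_combination (1 - i * i) * hi)
  obtain ⟨a, ha, hsa⟩ := hA.exists_not_commute hAZ hs
  obtain ⟨rfl, -⟩ := hA.eq_neg_one_and_apply_smul_eq_zero h2 h4 hs (hHA hsH) ha hsa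
  exact h11 (by simpa using hi)

theorem two_dvd_index_of_not_isSquare_neg_one [Finite F] (h2 : (2 : F) ≠ 0) (h3 : (3 : F) ≠ 0)
    (hsq : ¬ IsSquare (-1 : F))
    (h4 : Module.finrank F V = 4) (hA : IsHeisenbergType A)
    (hAZ : ¬ A ≤ scalarUnits F (Module.End F V))
    (hHA : H ≤ Subgroup.normalizer (A : Set (Module.End F V)ˣ)) : 2 ∣ H.index := by
  have : Nontrivial V := Module.nontrivial_of_finrank_pos (R := F) (by omega)
  have := Fact.mk Nat.prime_two
  by_contra hH
  have h11 : (-1 : F) ≠ 1 := fun h => h2 (by linear_combination -h)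
  obtain ⟨u, hu4, htu, hrot⟩ := exists_rotation hsq
  have ht₀ := isHomology_diagonalUnits_mulSingle (F := F) (0 : Fin 2) (ζ := -1) h11
  have ht₁ := isHomology_diagonalUnits_mulSingle (F := F) (1 : Fin 2) (ζ := -1) h11
  set t₀ := diagonalUnits F (Fin 2) (Pi.mulSingle 0 (-1))
  have hu8 : u ^ 2 ^ 3 = 1 := by
    rw [show 2 ^ 3 = 4 * 2 from rfl, pow_mul, hu4]
    exact Units.ext (neg_one_sq (R := Module.End F (Fin 2 → F)))
  have htt : u ^ 4 * t₀ = diagonalUnits F (Fin 2) (Pi.mulSingle 1 (-1)) := by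
    rw [hu4]
    exact (neg_one_mul t₀).trans neg_diagonalUnits_mulSingle_zero
  obtain ⟨P, Q, h, huH, htH⟩ := exists_extendByOne_mem (p := 2) (k := 3) (l := 1) (u := u)
    (V := V) (t := t₀) (by simp [h4]) hH
    hu8 (by rw [← map_pow, ← Pi.mulSingle_pow]; simp) htu
  have ht'H := mul_mem (pow_mem huH 4) htH
  rw [← map_pow, ← map_mul, htt] at ht'H
  have hQP (x : Fin 2 → F) : Q (P x) = x := LinearMap.congr_fun h x
  refine hA.false_of_rotation h2 h3 h4 hAZ (ht₀.map_extendByOne h) (ht₁.map_extendByOne h)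
    (hHA htH) (hHA ht'H) (by simp [hQP]) (by simp [hQP]) (hHA huH) (fun x h0 h1 => ?_)
    (fun x => ?_) ?_
  · have hQx : Q x = 0 := by
      ext i
      fin_cases i
      exacts [h0, h1]
    change extendByOne P Q h u x = x
    rw [extendByOne_apply, hQx, map_zero, sub_zero, map_zero, add_zero]
  · refine ⟨(u • Q x - Q x) 0, (u • Q x - Q x) 1, ?_⟩
    change extendByOne P Q h u x = _
    rw [extendByOne_apply, add_assoc, ← P.map_smul, ← P.map_smul, ← P.map_add]
    congr 2
    ext i
    fin_cases i <;> simp <;> rfl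
  · have hQg (g : (Module.End F (Fin 2 → F))ˣ) (y : Fin 2 → F) :
      Q (Units.map (extendByOne P Q h) g • P y) = g • y := by
      change Q (extendByOne P Q h g (P y)) = _
      rw [extendByOne_apply, map_add, hQP, hQP, add_sub_cancel]
      rfl
    rw [← map_inv, LinearMap.comp_apply, LinearMap.comp_apply, hQg, hQg]
    exact hrot

theorem two_dvd_index_of_finrank_eq_four [Finite F] (h2 : (2 : F) ≠ 0) (h3 : (3 : F) ≠ 0)
    (h4 : Module.finrank F V = 4) (hA : IsHeisenbergType A)
    (hAZ : ¬ A ≤ scalarUnits F (Module.End F V))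
    (hHA : H ≤ Subgroup.normalizer (A : Set (Module.End F V)ˣ)) : 2 ∣ H.index := by
  by_cases hsq : IsSquare (-1 : F)
  · exact hA.two_dvd_index_of_isSquare_neg_one h2 hsq h4 hAZ hHA
  · exact hA.two_dvd_index_of_not_isSquare_neg_one h2 h3 hsq h4 hAZ hHA

theorem pow_finrank_mem_scalarUnits (hA : IsHeisenbergType A) {a : (Module.End F V)ˣ}
    (ha : a ∈ A) : a ^ Module.finrank F V ∈ scalarUnits F (Module.End F V) := by
  refine hA.inf_centralizer_le ⟨A.pow_mem ha _, Subgroup.mem_centralizer_iff.2 fun c hc => ?_⟩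
  obtain ⟨l, hl⟩ := exists_smul_comm_of_commutator_mem_scalarUnits
    (hA.commutator_le (Subgroup.commutator_mem_commutator hc ha))
  have hpow (k : ℕ) (w : V) : c • (a ^ k) • w = l ^ k • (a ^ k) • c • w := by
    induction k generalizing w with
    | zero => simp
    | succ k ih => rw [pow_succ, mul_smul, ih, hl, smul_comm (a ^ k) l, smul_smul, ← pow_succ,
        mul_smul]
  have hl1 : l ^ Module.finrank F V = 1 := by
    have h : (c : Module.End F V) * a = l • ((a : Module.End F V) * c) := LinearMap.ext hl
    have hdet := congrArg LinearMap.det h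
    rw [LinearMap.det_smul, map_mul, map_mul, mul_comm (LinearMap.det (a : Module.End F V))] at hdet
    have hunit : IsUnit (LinearMap.det (c : Module.End F V) * LinearMap.det (a : Module.End F V)) :=
      (c.isUnit.map LinearMap.det).mul (a.isUnit.map LinearMap.det)
    exact (hunit.mul_right_cancel ((one_mul _).trans hdet)).symm
  exact Units.ext (LinearMap.ext fun w => (hpow _ w).trans (by rw [hl1, one_smul]; rfl))

theorem mem_scalarUnits_of_commute (h3 : 3 ≤ Module.finrank F V) (hA : IsHeisenbergType A)
    {t a : (Module.End F V)ˣ} {ζ : F} {φ : V →ₗ[F] F} {v : V} (ht : IsHomology t ζ φ v)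
    (hζ : ζ ^ Module.finrank F V ≠ 1)
    (htA : t ∈ Subgroup.normalizer (A : Set (Module.End F V)ˣ)) (ha : a ∈ A)
    (hta : Commute t a) : a ∈ scalarUnits F (Module.End F V) := by
  by_contra haZ
  obtain ⟨c, hc, l, hl1, hl⟩ := hA.exists_twist ha haZ
  have hu : φ (c⁻¹ • v) = 0 := by
    have hau : a • c⁻¹ • v = (l * φ (a • v)) • c⁻¹ • v := by
      rw [← smul_comm c⁻¹ (_ : F), eq_inv_smul_iff, hl, smul_inv_smul, mul_smul,
        ← ht.smul_center_of_commute hta]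
    have h := ht.apply_smul_of_commute hta (c⁻¹ • v)
    rw [hau, φ.map_smul, smul_eq_mul] at h
    have h' : (l - 1) * φ (a • v) * φ (c⁻¹ • v) = 0 := by linear_combination h
    simpa [sub_ne_zero.2 hl1, ht.apply_smul_center_ne_zero hta] using h'
  let b : (Module.End F V)ˣ := ⁅t, c⁆
  have hb (w : V) : b • w = t • c • t⁻¹ • c⁻¹ • w := by
    simp only [b, commutatorElement_def, mul_smul]
  have hbv : b • v = ζ • v := by
    rw [hb, ht.inv_smul_of_apply_eq_zero hu, smul_inv_smul, ht.smul_center]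
  obtain ⟨w, hw0, hw, hcw⟩ := exists_ne_zero_of_three_le_finrank h3 φ
    (φ ∘ₗ ((c⁻¹ : (Module.End F V)ˣ) : Module.End F V))
  have hbw : b • w = w := by
    rw [hb, ht.inv_smul_of_apply_eq_zero (w := c⁻¹ • w) hcw, smul_inv_smul,
      ht.smul_of_apply_eq_zero hw]
  have hbA : b ∈ A :=
    A.mul_mem ((Subgroup.mem_normalizer_iff.1 htA c).1 hc) (A.inv_mem hc)
  obtain ⟨m, hm⟩ := mem_scalarUnits_iff_exists_smul.1 (hA.pow_finrank_mem_scalarUnits hbA)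
  have hbm (x : V) : b ^ Module.finrank F V • x = m • x := LinearMap.congr_fun hm x
  have hm1 : m = 1 := by
    refine smul_left_injective F hw0 ?_
    simp only [← hbm, one_smul]
    exact MulAction.mem_stabilizer_iff.1
      (pow_mem (S := MulAction.stabilizer (Module.End F V)ˣ w) hbw _)
  have hpow (k : ℕ) : b ^ k • v = ζ ^ k • v := by
    induction k with
    | zero => simp
    | succ k ih => rw [pow_succ, mul_smul, hbv, smul_comm, ih, smul_smul, pow_succ']
  refine hζ (smul_left_injective F ht.ne_zero ?_)
  simp only [← hpow, hbm, hm1]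

theorem conj_mul_self_mem_scalarUnits (h3 : 3 ≤ Module.finrank F V) (hA : IsHeisenbergType A)
    {t a : (Module.End F V)ˣ} {φ : V →ₗ[F] F} {v : V} (ht : IsHomology t (-1) φ v)
    (hn : (-1 : F) ^ Module.finrank F V ≠ 1)
    (htA : t ∈ Subgroup.normalizer (A : Set (Module.End F V)ˣ)) (ha : a ∈ A) :
    t * a * t⁻¹ * a ∈ scalarUnits F (Module.End F V) := by
  have hta : t * a * t⁻¹ ∈ A := (Subgroup.mem_normalizer_iff.1 htA a).1 ha
  refine hA.mem_scalarUnits_of_commute h3 ht hn htA (A.mul_mem hta ha)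
    (ht.commute_of_commutator_mem_scalarUnits h3 ?_)
  have hcomm : ⁅t, t * a * t⁻¹ * a⁆ = ⁅a, t * a * t⁻¹⁆ := by
    have htt : t⁻¹ = t := Units.ext (LinearMap.ext fun w => by
      exact (ht.inv_smul_eq w).trans (by rw [inv_neg_one, ← ht.smul_eq]; rfl))
    have htx (x : (Module.End F V)ˣ) : t * (t * x) = x := by
      rw [← htt, inv_mul_eq_iff_eq_mul, htt]
    simp only [commutatorElement_def, htt, mul_assoc, _root_.mul_inv_rev, htx]
  exact hcomm ▸ hA.commutator_le (Subgroup.commutator_mem_commutator ha hta)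

theorem two_dvd_index_of_finrank_eq_three [Finite F] (h2 : (2 : F) ≠ 0)
    (h3 : Module.finrank F V = 3) (hA : IsHeisenbergType A)
    (hAZ : ¬ A ≤ scalarUnits F (Module.End F V))
    (hHA : H ≤ Subgroup.normalizer (A : Set (Module.End F V)ˣ)) : 2 ∣ H.index := by
  have := Fact.mk Nat.prime_two
  by_contra hH
  have h11 : (-1 : F) ≠ 1 := fun h => h2 (by linear_combination -h)
  have hn : (-1 : F) ^ Module.finrank F V ≠ 1 := by rwa [h3, Odd.neg_one_pow (by decide)]
  let r (i : Fin 3) := diagonalUnits F (Fin 3) (Pi.mulSingle i (-1))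
  have hr (i : Fin 3) := isHomology_diagonalUnits_mulSingle (F := F) i (ζ := -1) h11
  have hr2 (i : Fin 3) : r i ^ 2 ^ 1 = 1 := by
    simp only [r, ← map_pow, ← Pi.mulSingle_pow]
    simp
  obtain ⟨P, Q, h, hH₀, hH₁⟩ := exists_extendByOne_mem (V := V) (by simp [h3]) hH (hr2 0) (hr2 1)
    (by
      rw [mul_inv_eq_iff_eq_mul.2]
      · exact Subgroup.mem_zpowers _
      · simp only [r, ← map_mul, mul_comm])
  let t (i : Fin 3) := Units.map (extendByOne P Q h) (r i)
  have ht (i : Fin 3) := (hr i).map_extendByOne h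
  have hprod : t 0 * t 1 = -t 2 := by
    simp only [t, r]
    rw [← map_mul, diagonalUnits_mulSingle_zero_mul_one,
      map_extendByOne_neg_of_finrank_eq (by simp [h3])]
  obtain ⟨a, ha, hta⟩ := hA.exists_not_commute hAZ (ht 2)
  refine hta ((ht 2).commute_of_commutator_mem_scalarUnits h3.ge ?_)
  let y := t 1 * a * (t 1)⁻¹
  have hya : y * a ∈ scalarUnits F (Module.End F V) :=
    hA.conj_mul_self_mem_scalarUnits h3.ge (ht 1) hn (hHA hH₁) ha
  have hty : t 0 * y * (t 0)⁻¹ * y ∈ scalarUnits F (Module.End F V) :=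
    hA.conj_mul_self_mem_scalarUnits h3.ge (ht 0) hn (hHA hH₀)
      ((Subgroup.mem_normalizer_iff.1 (hHA hH₁) a).1 ha)
  have hcomm : ⁅t 2, a⁆ = t 0 * y * (t 0)⁻¹ * y * (a * y)⁻¹ := by
    calc ⁅t 2, a⁆ = ⁅-t 2, a⁆ := by simp [commutatorElement_def, inv_neg]
      _ = t 0 * y * (t 0)⁻¹ * y * (a * y)⁻¹ := by
        rw [← hprod]
        simp only [commutatorElement_def, y]
        group
  change ⁅t 2, a⁆ ∈ _
  rw [hcomm]
  exact mul_mem hty (inv_mem (normal_scalarUnits.mem_comm hya))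

end IsHeisenbergType

theorem hasCommutingIdempotent_of_isSolvable [Finite F] (p : ℕ) [Fact p.Prime] [CharP F p]
    (h2 : (2 : F) ≠ 0) (h3 : (3 : F) ≠ 0) (hn : 3 ≤ Module.finrank F V)
    (hs : Group.IsSolvable H) (hp : ¬ p ∣ Nat.card H) (hH : ¬ 2 ∣ H.index) :
    HasCommutingIdempotent H := by
  have : Nontrivial V := Module.nontrivial_of_finrank_pos (R := F) (by omega)
  by_contra hno
  obtain ⟨t, htH, φ, v, ht⟩ := exists_isHomology_mem (V := V) hH (ζ := -1) (k := 1)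
    (fun h => h2 (by linear_combination -h)) (by norm_num)
  obtain ⟨A, hHA, hAZ, hA⟩ := exists_isHeisenbergType p hn hs hp hno ht htH
  obtain ⟨a, ha, hta⟩ := hA.exists_not_commute hAZ ht
  have hn4 : Module.finrank F V ≤ 4 := hA.finrank_le_four hn ht (hHA htH) ha hta
  obtain h | h : Module.finrank F V = 3 ∨ Module.finrank F V = 4 := by omega
  · exact hH (hA.two_dvd_index_of_finrank_eq_three h2 h hAZ hHA)
  · exact hH (hA.two_dvd_index_of_finrank_eq_four h2 h3 h hAZ hHA)

end ExistsCommutingIdempotent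

section CompleteOrthogonalIdempotents

theorem eq_id_of_forall_le_iff_le {m : ℕ} {σ τ : Fin m → Fin m} (hτ : Function.Injective τ)
    (h : ∀ k l, k ≤ l ↔ τ k ≤ σ l) : σ = id ∧ τ = id := by
  have hIic (l : Fin m) : Finset.Iic (σ l) = (Finset.Iic l).image τ := by
    ext k
    obtain ⟨j, rfl⟩ := Finite.surjective_of_injective hτ k
    simp [← h, hτ.eq_iff]
  have hσ (l : Fin m) : σ l = l := by
    have := congrArg Finset.card (hIic l)
    rw [Finset.card_image_of_injective _ hτ, Fin.card_Iic, Fin.card_Iic] at this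
    exact Fin.ext (by omega)
  exact ⟨funext hσ, funext fun k => eq_of_forall_ge_iff fun l => by
    rw [id, h k l, hσ]⟩

variable {R : Type*} [Ring R] {m : ℕ} {e : Fin m → R}

theorem eq_of_forall_mul_mul_eq (he : ∑ i, e i = 1) {x y : R}
    (h : ∀ k l, e k * x * e l = e k * y * e l) : x = y := by
  have hsum (z : R) : ∑ k, ∑ l, e k * z * e l = z := by
    simp only [← Finset.mul_sum, ← Finset.sum_mul, he, one_mul, mul_one]
  rw [← hsum x, ← hsum y]
  simp only [h]

theorem pow_eq_zero_of_forall_mul_mul_eq_zero (he : CompleteOrthogonalIdempotents e) {x : R}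
    (hx : ∀ k l, ¬ k < l → e k * x * e l = 0) : x ^ m = 0 := by
  have hpow (t : ℕ) (k l : Fin m) (hkl : (l : ℕ) < k + t) : e k * x ^ t * e l = 0 := by
    induction t generalizing k with
    | zero => rw [pow_zero, mul_one, he.ortho (by rintro rfl; omega)]
    | succ t ih =>
      calc e k * x ^ (t + 1) * e l = e k * x * (∑ j, e j) * x ^ t * e l := by
            rw [he.complete, mul_one, pow_succ', mul_assoc (e k) x]
        _ = ∑ j, e k * x * (e j * x ^ t * e l) := by
            simp only [Finset.mul_sum, Finset.sum_mul, mul_assoc]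
        _ = 0 := Finset.sum_eq_zero fun j _ => by
            by_cases hkj : k < j
            · rw [ih j (by rw [Fin.lt_def] at hkj; omega), mul_zero]
            · rw [← (he.idem j).eq, ← mul_assoc, ← mul_assoc, ← mul_assoc, hx k j hkj]
              simp only [zero_mul]
  refine eq_of_forall_mul_mul_eq he.complete fun k l => ?_
  rw [hpow m k l (by omega), mul_zero, zero_mul]

theorem injective_of_forall_mul_eq_mul (he : OrthogonalIdempotents e) (h0 : ∀ i, e i ≠ 0)
    {g : Rˣ} {σ : Fin m → Fin m} (h : ∀ i, (g : R) * e i = e (σ i) * g) :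
    Function.Injective σ := by
  intro i j hij
  by_contra hne
  have hij : e i = e j := (Units.mul_right_inj g).1 (by rw [h, h, hij])
  exact h0 i (by rw [← (he.idem i).eq]; nth_rw 2 [hij]; exact he.ortho hne)

theorem commute_of_permutes_of_upperTriangular (he : CompleteOrthogonalIdempotents e)
    (h0 : ∀ i, e i ≠ 0) {x : R} (hx : ∀ k l, e k * x * e l ≠ 0 ↔ k ≤ l)
    (hx1 : ∀ k, e k * x * e k = e k) {g g' : Rˣ}
    (hg : ∀ i, ∃ j, (g : R) * e i = e j * g) (hg' : ∀ i, ∃ j, (g' : R) * e i = e j * g')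
    (hgx : (g' : R) * x = x * g) : Commute (g : R) x ∧ ∀ i, Commute (g : R) (e i) := by
  choose σ hσ using hg
  choose τ hτ using hg'
  have hblock (k l : Fin m) : (g' : R) * (e k * x * e l) = e (τ k) * x * e (σ l) * g := by
    calc (g' : R) * (e k * x * e l) = g' * e k * x * e l := by simp only [mul_assoc]
      _ = e (τ k) * (g' * x) * e l := by rw [hτ]; simp only [mul_assoc]
      _ = e (τ k) * x * (g * e l) := by rw [hgx]; simp only [mul_assoc]
      _ = e (τ k) * x * e (σ l) * g := by rw [hσ]; simp only [mul_assoc]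
  obtain ⟨rfl, rfl⟩ : σ = id ∧ τ = id :=
    eq_id_of_forall_le_iff_le (injective_of_forall_mul_eq_mul he.toOrthogonalIdempotents h0 hτ)
      fun k l => by
        rw [← hx, ← hx, not_iff_not, ← Units.mul_right_eq_zero g', hblock, Units.mul_left_eq_zero]
  have hgg' : (g' : R) = g := by
    rw [← mul_one (g' : R), ← one_mul (g : R), ← he.complete, Finset.mul_sum, Finset.sum_mul]
    refine Finset.sum_congr rfl fun l _ => ?_
    simpa only [hx1, id] using hblock l l
  exact ⟨by rw [commute_iff_eq, ← hgx, hgg'], hσ⟩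

/-- The strictly upper triangular element whose block at the position `i < j` of the decomposition
given by `e` is the block of `n i j`. -/
def strictUpper (e : Fin m → R) (n : Fin m → Fin m → R) : R :=
  ∑ i, ∑ j ∈ Finset.Ioi i, e i * n i j * e j

theorem mul_strictUpper_mul (he : OrthogonalIdempotents e) (n : Fin m → Fin m → R)
    (k l : Fin m) :
    e k * strictUpper e n * e l = if k < l then e k * n k l * e l else 0 := by
  have hterm (i j : Fin m) : e k * (e i * n i j * e j) * e l =
      if k = i then if j = l then e k * n k l * e l else 0 else 0 := by
    calc e k * (e i * n i j * e j) * e l = e k * e i * n i j * (e j * e l) := by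
          simp only [mul_assoc]
      _ = _ := by
          rw [he.mul_eq, he.mul_eq]
          split_ifs <;> simp_all
  simp only [strictUpper, Finset.mul_sum, Finset.sum_mul, hterm]
  rw [Finset.sum_eq_single k (fun i _ hi => by simp [hi.symm]) (by simp)]
  simp

theorem mul_one_add_strictUpper_mul (he : OrthogonalIdempotents e) (n : Fin m → Fin m → R)
    (k l : Fin m) : e k * (1 + strictUpper e n) * e l =
      if k = l then e k else if k < l then e k * n k l * e l else 0 := by
  rw [mul_add, add_mul, mul_one, he.mul_eq, mul_strictUpper_mul he]
  split_ifs with hkl hlt <;> simp_all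

theorem strictUpper_pow_eq_zero (he : CompleteOrthogonalIdempotents e) (n : Fin m → Fin m → R) :
    strictUpper e n ^ m = 0 :=
  pow_eq_zero_of_forall_mul_mul_eq_zero he fun k l hkl => by
    rw [mul_strictUpper_mul he.toOrthogonalIdempotents, if_neg hkl]

end CompleteOrthogonalIdempotents

section SmallBlocks

variable {F V : Type*} [Field F] [AddCommGroup V] [Module F V]

theorem det_one_add_of_isNilpotent [Module.Finite F V] {N : Module.End F V} (hN : IsNilpotent N) :
    LinearMap.det (1 + N) = 1 := by
  have h := (-N).eval_charpoly 1
  rw [hN.neg.charpoly_eq_X_pow_finrank] at h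
  simpa using h.symm

/-- `a, b` and `α, β` are dual coordinates on the range of the projection `e` of rank at most two;
in rank one, `b` and `β` vanish. -/
structure IsBlockFrame (e : Module.End F V) (a b : V) (α β : V →ₗ[F] F) : Prop where
  apply (w : V) : e w = α w • a + β w • b
  α_a : α a = 1
  β_a : β a = 0
  α_b : α b = 0
  map_b : e b = b
  β_map (w : V) : β (e w) = β w

namespace IsBlockFrame

variable {e e' g : Module.End F V} {a b a' b' : V} {α β α' β' : V →ₗ[F] F}

theorem map_a (he : IsBlockFrame e a b α β) : e a = a := by
  rw [he.apply, he.α_a, he.β_a, one_smul, zero_smul, add_zero]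

theorem α_map (he : IsBlockFrame e a b α β) (w : V) : α (e w) = α w := by
  simp [he.apply, he.α_a, he.α_b]

theorem ne_zero (he : IsBlockFrame e a b α β) : a ≠ 0 := by
  rintro rfl
  simpa using he.α_a

theorem exists_of_finrank_range_le [Module.Finite F V] (he : IsIdempotentElem e) (h0 : e ≠ 0)
    (hr : Module.finrank F (LinearMap.range e) ≤ 2) : ∃ a b α β, IsBlockFrame e a b α β := by
  have hfix (w : LinearMap.range e) : e.rangeRestrict w = w := by
    obtain ⟨_, u, rfl⟩ := w
    exact Subtype.ext (LinearMap.congr_fun he u)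
  have hfix' (w : LinearMap.range e) : e w = w := congrArg Subtype.val (hfix w)
  have hpos : Module.finrank F (LinearMap.range e) ≠ 0 := by
    rwa [Ne, Submodule.finrank_eq_zero, LinearMap.range_eq_bot]
  obtain h | h : Module.finrank F (LinearMap.range e) = 1 ∨
      Module.finrank F (LinearMap.range e) = 2 := by omega
  · let B := Module.finBasisOfFinrankEq F _ h
    refine ⟨B 0, 0, B.coord 0 ∘ₗ e.rangeRestrict, 0, ⟨fun w => ?_, ?_, ?_, ?_, ?_, ?_⟩⟩
    · simpa using (congrArg Subtype.val (B.sum_repr (e.rangeRestrict w))).symm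
    all_goals simp [hfix]
  · let B := Module.finBasisOfFinrankEq F _ h
    refine ⟨B 0, B 1, B.coord 0 ∘ₗ e.rangeRestrict, B.coord 1 ∘ₗ e.rangeRestrict,
      ⟨fun w => ?_, ?_, ?_, ?_, hfix' _, fun w => ?_⟩⟩
    · have hsum := congrArg Subtype.val (B.sum_repr (e.rangeRestrict w))
      rw [Fin.sum_univ_two] at hsum
      exact hsum.symm
    · simp [hfix]
    · simp [hfix]
    · simp [hfix]
    · exact congrArg (B.coord 1) (hfix (e.rangeRestrict w))

theorem exists_mul_eq_smul_of_commute (he : IsBlockFrame e a b α β)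
    (he' : IsBlockFrame e' a' b' α' β') (hg : Commute g e')
    (h0 : Commute g (α'.smulRight a + β'.smulRight b : Module.End F V))
    (h1 : Commute g (β'.smulRight a)) (h2 : Commute g (α'.smulRight b)) :
    ∃ z : F, g * e = z • e ∧ g * e' = z • e' := by
  have h0 (w : V) : α' w • g a + β' w • g b = α' (g w) • a + β' (g w) • b := by
    simpa using LinearMap.congr_fun h0 w
  have h1 (w : V) : β' w • g a = β' (g w) • a := by simpa using LinearMap.congr_fun h1 w
  have h2 (w : V) : α' w • g b = α' (g w) • b := by simpa using LinearMap.congr_fun h2 w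
  have hβa : β' (g a') = 0 := by
    simpa [he'.β_a, he.ne_zero] using (h1 a').symm
  set z := α' (g a')
  have hga : g a = z • a := by simpa [he'.α_a, he'.β_a, hβa] using h0 a'
  have hgb : g b = z • b := by simpa [he'.α_a] using h2 a'
  have hα (w : V) : α' (g w) = z * α' w := by
    simpa [hga, hgb, he.α_a, he.α_b, mul_comm] using (congrArg α (h0 w)).symm
  have hβ (w : V) : β' (g w) = z * β' w := by
    simpa [hga, he.α_a, mul_comm] using (congrArg α (h1 w)).symm
  refine ⟨z, LinearMap.ext fun w => ?_, hg.eq.trans (LinearMap.ext fun w => ?_)⟩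
  · simp [he.apply, hga, hgb, smul_comm z]
  · simp [he'.apply, hα, hβ, mul_smul]

end IsBlockFrame

theorem mem_scalarUnits_of_forall_ne {ι : Type*} [Fintype ι] [Nontrivial ι]
    {e : ι → Module.End F V} (he : ∑ i, e i = 1) {i : ι} (h0 : e i ≠ 0) {g : (Module.End F V)ˣ}
    (hg : ∀ l, l ≠ i → ∃ z : F, (g : Module.End F V) * e i = z • e i ∧
      (g : Module.End F V) * e l = z • e l) : g ∈ scalarUnits F (Module.End F V) := by
  obtain ⟨j, hj⟩ := exists_ne i
  obtain ⟨z, hzi, -⟩ := hg j hj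
  have hz (l : ι) : (g : Module.End F V) * e l = z • e l := by
    obtain rfl | hl := eq_or_ne l i
    · exact hzi
    · obtain ⟨y, hyi, hyl⟩ := hg l hl
      rw [hyl, smul_left_injective F h0 (hyi.symm.trans hzi)]
  refine mem_scalarUnits_iff_exists_smul.2 ⟨z, ?_⟩
  rw [← he, Finset.smul_sum, ← mul_one (g : Module.End F V), ← he, Finset.mul_sum]
  exact Finset.sum_congr rfl fun l _ => hz l

variable {m : ℕ} {e : Fin m → Module.End F V} {a b : Fin m → V} {α β : Fin m → V →ₗ[F] F}

/-- The three block patterns, indexed by `s`, of the unipotent elements that pin down the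
stabiliser of a decomposition into blocks of size at most two: on `e k * _ * e l` they are, in
terms of the frames, the matrices `1`, `1 + E₁₂` and `1 + E₂₁`. -/
def blockPattern (a b : Fin m → V) (α β : Fin m → V →ₗ[F] F) (s : Fin 3) (k l : Fin m) :
    Module.End F V :=
  (α l).smulRight (a k) + (β l).smulRight (b k) +
    ![0, (β l).smulRight (a k), (α l).smulRight (b k)] s

theorem mul_blockPattern_mul (he : ∀ i, IsBlockFrame (e i) (a i) (b i) (α i) (β i)) (s : Fin 3)
    (k l : Fin m) : e k * blockPattern a b α β s k l * e l = blockPattern a b α β s k l := by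
  ext w
  fin_cases s <;> simp [blockPattern, (he k).map_a, (he k).map_b, (he l).α_map, (he l).β_map]

theorem blockPattern_ne_zero (he : ∀ i, IsBlockFrame (e i) (a i) (b i) (α i) (β i)) (s : Fin 3)
    (k l : Fin m) : blockPattern a b α β s k l ≠ 0 := by
  intro h
  have h := congrArg (α k) (LinearMap.congr_fun h (a l))
  fin_cases s <;> simp [blockPattern, (he k).α_a, (he k).α_b, (he l).α_a, (he l).β_a] at h

theorem commute_blockPattern (hdec : CompleteOrthogonalIdempotents e)
    (he : ∀ i, IsBlockFrame (e i) (a i) (b i) (α i) (β i)) {s : Fin 3} {x g : (Module.End F V)ˣ}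
    (hx : (x : Module.End F V) = 1 + strictUpper e (blockPattern a b α β s))
    (hg : ∀ i, ∃ j, (g : Module.End F V) * e i = e j * g)
    (hg' : ∀ i, ∃ j, ((x * g * x⁻¹ : (Module.End F V)ˣ) : Module.End F V) * e i =
      e j * ((x * g * x⁻¹ : (Module.End F V)ˣ) : Module.End F V)) :
    (∀ i, Commute (g : Module.End F V) (e i)) ∧
      ∀ k l, k < l → Commute (g : Module.End F V) (blockPattern a b α β s k l) := by
  have h0 (i : Fin m) : e i ≠ 0 := fun h => (he i).ne_zero (by rw [← (he i).map_a, h]; rfl)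
  have hblock (k l : Fin m) : e k * (x : Module.End F V) * e l =
      if k = l then e k else if k < l then blockPattern a b α β s k l else 0 := by
    rw [hx, mul_one_add_strictUpper_mul hdec.toOrthogonalIdempotents, mul_blockPattern_mul he]
  have hne (k l : Fin m) : e k * (x : Module.End F V) * e l ≠ 0 ↔ k ≤ l := by
    rw [hblock]
    split_ifs with hkl hlt
    · simp [hkl, h0]
    · simp [blockPattern_ne_zero he, hlt.le]
    · simpa using lt_of_le_of_ne (not_lt.1 hlt) (Ne.symm hkl)
  obtain ⟨hgx, hge⟩ := commute_of_permutes_of_upperTriangular hdec h0 hne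
    (fun k => by rw [hblock, if_pos rfl]) hg hg'
    (by rw [← Units.val_mul, ← Units.val_mul, inv_mul_cancel_right])
  refine ⟨hge, fun k l hkl => ?_⟩
  have := ((hge k).mul_right hgx).mul_right (hge l)
  rwa [hblock, if_neg hkl.ne, if_pos hkl] at this

theorem exists_units_forall_permutes_mem_scalarUnits [Module.Finite F V] (hm : 2 ≤ m)
    (hdec : CompleteOrthogonalIdempotents e) (h0 : ∀ i, e i ≠ 0)
    (hr : ∀ i, Module.finrank F (LinearMap.range (e i)) ≤ 2) :
    ∃ x : Fin 3 → (Module.End F V)ˣ, (∀ s, LinearMap.det (x s : Module.End F V) = 1) ∧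
      ∀ g : (Module.End F V)ˣ, (∀ i, ∃ j, (g : Module.End F V) * e i = e j * g) →
        (∀ s i, ∃ j, ((x s * g * (x s)⁻¹ : (Module.End F V)ˣ) : Module.End F V) * e i =
          e j * ((x s * g * (x s)⁻¹ : (Module.End F V)ˣ) : Module.End F V)) →
        g ∈ scalarUnits F (Module.End F V) := by
  choose a b α β he using fun i =>
    IsBlockFrame.exists_of_finrank_range_le (hdec.idem i) (h0 i) (hr i)
  have hnil (s : Fin 3) : IsNilpotent (strictUpper e (blockPattern a b α β s)) :=
    ⟨m, strictUpper_pow_eq_zero hdec _⟩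
  choose x hx using fun s => (hnil s).isUnit_one_add
  refine ⟨x, fun s => by rw [hx, det_one_add_of_isNilpotent (hnil s)], fun g hg hg' => ?_⟩
  have hcomm (s : Fin 3) := commute_blockPattern hdec he (hx s) hg (hg' s)
  have : NeZero m := ⟨by omega⟩
  have : Nontrivial (Fin m) := Fin.nontrivial_iff_two_le.2 hm
  refine mem_scalarUnits_of_forall_ne hdec.complete (h0 0) fun l hl => ?_
  have hpat (s : Fin 3) := (hcomm s).2 0 l (Fin.pos_iff_ne_zero.2 hl)
  have h := hpat 0
  simp only [blockPattern, Matrix.cons_val_zero, add_zero] at h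
  exact (he 0).exists_mul_eq_smul_of_commute (he l) ((hcomm 0).1 l) h
    (by simpa [blockPattern] using (hpat 1).sub_right h)
    (by simpa [blockPattern] using (hpat 2).sub_right h)

end SmallBlocks

section InvariantIdempotents

variable {Γ R : Type*} [Group Γ] [Ring R] [MulSemiringAction Γ R] {D : Set R} {e f : R}

theorem commute_smul_smul_iff (γ : Γ) {x y : R} : Commute (γ • x) (γ • y) ↔ Commute x y := by
  rw [commute_iff_eq, commute_iff_eq, ← smul_mul', ← smul_mul', smul_left_cancel_iff]

variable (Γ) in
/-- `D` is a `Γ`-invariant set of pairwise commuting idempotents. -/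
structure IsInvariantIdempotents (D : Set R) : Prop where
  idem : ∀ d ∈ D, IsIdempotentElem d
  comm : ∀ d ∈ D, ∀ d' ∈ D, Commute d d'
  smul_mem : ∀ γ : Γ, ∀ d ∈ D, γ • d ∈ D

theorem exists_maximal_isInvariantIdempotents [Finite R] :
    ∃ D : Set R, Maximal (IsInvariantIdempotents Γ) D :=
  (Set.toFinite {D : Set R | IsInvariantIdempotents Γ D}).exists_maximal
    ⟨∅, by simp, by simp, by simp⟩

theorem mem_of_maximal_isInvariantIdempotents (hD : Maximal (IsInvariantIdempotents Γ) D)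
    (hf : IsIdempotentElem f) (hfD : ∀ d ∈ D, Commute f d) (hfΓ : ∀ γ : Γ, Commute f (γ • f)) :
    f ∈ D := by
  have hsmul (γ : Γ) {d : R} (hd : d ∈ D) : Commute (γ • f) d := by
    rw [← commute_smul_smul_iff γ⁻¹, inv_smul_smul]
    exact hfD _ (hD.prop.smul_mem _ d hd)
  have hext : IsInvariantIdempotents Γ (D ∪ Set.range fun γ : Γ => γ • f) := by
    refine ⟨?_, ?_, ?_⟩
    · rintro d (hd | ⟨γ, rfl⟩)
      · exact hD.prop.idem d hd
      · exact (smul_mul' γ f f).symm.trans (congrArg (γ • ·) hf)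
    · rintro d (hd | ⟨γ, rfl⟩) d' (hd' | ⟨δ, rfl⟩)
      · exact hD.prop.comm d hd d' hd'
      · exact (hsmul δ hd).symm
      · exact hsmul γ hd'
      · rw [← commute_smul_smul_iff γ⁻¹, inv_smul_smul, smul_smul]
        exact hfΓ _
    · rintro γ d (hd | ⟨δ, rfl⟩)
      · exact Or.inl (hD.prop.smul_mem γ d hd)
      · exact Or.inr ⟨γ * δ, mul_smul γ δ f⟩
  exact hD.le_of_ge hext Set.subset_union_left (Or.inr ⟨1, one_smul Γ f⟩)

theorem mul_mem_of_maximal_isInvariantIdempotents (hD : Maximal (IsInvariantIdempotents Γ) D)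
    (he : e ∈ D) (hf : f ∈ D) : e * f ∈ D := by
  have hcomm : ∀ d ∈ D, Commute (e * f) d := fun d hd =>
    (hD.prop.comm e he d hd).mul_left (hD.prop.comm f hf d hd)
  refine mem_of_maximal_isInvariantIdempotents hD
    ((hD.prop.idem e he).mul_of_commute (hD.prop.comm e he f hf) (hD.prop.idem f hf)) hcomm
    fun γ => ?_
  rw [smul_mul']
  exact (hcomm _ (hD.prop.smul_mem γ e he)).mul_right (hcomm _ (hD.prop.smul_mem γ f hf))

/-- `e` is a minimal nonzero element of the set `D` of commuting idempotents. -/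
structure IsIdempotentAtom (D : Set R) (e : R) : Prop where
  mem : e ∈ D
  ne_zero : e ≠ 0
  mul_eq : ∀ d ∈ D, d * e = 0 ∨ d * e = e

namespace IsIdempotentAtom

theorem smul (he : IsIdempotentAtom D e) (hD : IsInvariantIdempotents Γ D) (γ : Γ) :
    IsIdempotentAtom D (γ • e) := by
  refine ⟨hD.smul_mem γ e he.mem, (smul_ne_zero_iff_ne γ).2 he.ne_zero, fun d hd => ?_⟩
  have hmul : d * γ • e = γ • (γ⁻¹ • d * e) := by rw [smul_mul', smul_inv_smul]
  rcases he.mul_eq _ (hD.smul_mem γ⁻¹ d hd) with h | h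
  · exact Or.inl (by rw [hmul, h, smul_zero])
  · exact Or.inr (by rw [hmul, h])

theorem mul_eq_zero_of_ne (he : IsIdempotentAtom D e) (hf : IsIdempotentAtom D f)
    (hD : IsInvariantIdempotents Γ D) (hne : e ≠ f) : e * f = 0 := by
  have hcomm := hD.comm e he.mem f hf.mem
  rcases hf.mul_eq e he.mem with h | h
  · exact h
  · rcases he.mul_eq f hf.mem with h' | h'
    · rw [hcomm, h']
    · exact absurd (h'.symm.trans (hcomm.symm.eq.trans h)) hne

theorem commute_of_mul_eq (he : IsIdempotentAtom D e) (hD : IsInvariantIdempotents Γ D)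
    (hef : e * f = f) (hfe : f * e = f) {d : R} (hd : d ∈ D) : Commute f d := by
  have hfd : f * d = f * (d * e) := by
    rw [(hD.comm d hd e he.mem).eq, ← mul_assoc, hfe]
  have hdf : d * f = d * e * f := by rw [mul_assoc, hef]
  rw [commute_iff_eq, hfd, hdf]
  rcases he.mul_eq d hd with h | h <;> simp [h, hef, hfe]

theorem exists_mul_eq_of_mem [Finite R] (hD : Maximal (IsInvariantIdempotents Γ) D) (hf : f ∈ D)
    (hf0 : f ≠ 0) : ∃ e, IsIdempotentAtom D e ∧ f * e = e := by
  obtain ⟨e, ⟨he, he0, hfe⟩, hmin⟩ :=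
    (Set.toFinite {d | d ∈ D ∧ d ≠ 0 ∧ f * d = d}).exists_minimalFor (fun d => Set.range (d * ·))
      _ ⟨f, hf, hf0, hD.prop.idem f hf⟩
  refine ⟨e, ⟨he, he0, fun d hd => or_iff_not_imp_left.2 fun hde => ?_⟩, hfe⟩
  obtain ⟨x, hx⟩ : e ∈ Set.range (d * e * ·) := by
    refine hmin ⟨mul_mem_of_maximal_isInvariantIdempotents hD hd he, hde, ?_⟩ ?_
      ⟨1, mul_one e⟩
    · rw [(hD.prop.comm d hd e he).eq, ← mul_assoc, hfe]
    · rintro _ ⟨x, rfl⟩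
      exact ⟨d * x, by simp only [← mul_assoc, (hD.prop.comm d hd e he).eq]⟩
  replace hx : d * e * x = e := hx
  calc d * e = d * (d * e * x) := by rw [hx]
    _ = e := by rw [← mul_assoc, ← mul_assoc, (hD.prop.idem d hd).eq, hx]

end IsIdempotentAtom

variable {m : ℕ} {e : Fin m → R}

theorem sum_eq_one_of_isIdempotentAtom [Finite R] (hD : Maximal (IsInvariantIdempotents Γ) D)
    (he : OrthogonalIdempotents e) (hatom : ∀ f, IsIdempotentAtom D f ↔ ∃ i, e i = f) :
    ∑ i, e i = 1 := by
  have heD (i : Fin m) : e i ∈ D := ((hatom _).2 ⟨i, rfl⟩).mem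
  have hsum (d : R) (hd : d ∈ D) : Commute (1 - ∑ i, e i) d :=
    (Commute.one_left d).sub_left
      (Commute.sum_left _ _ _ fun i _ => hD.prop.comm _ (heD i) d hd)
  have hmem : 1 - ∑ i, e i ∈ D := by
    refine mem_of_maximal_isInvariantIdempotents hD he.isIdempotentElem_sum.one_sub hsum
      fun γ => ?_
    rw [smul_sub, smul_one, Finset.smul_sum]
    exact (Commute.one_right _).sub_right
      (Commute.sum_right _ _ _ fun i _ => hsum _ (hD.prop.smul_mem γ _ (heD i)))
  by_contra hne
  obtain ⟨f, hf, hsf⟩ :=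
    IsIdempotentAtom.exists_mul_eq_of_mem hD hmem (sub_ne_zero.2 (Ne.symm hne))
  obtain ⟨i, rfl⟩ := (hatom f).1 hf
  rw [hsum _ (heD i), mul_sub, mul_one, he.mul_sum_of_mem (Finset.mem_univ i), sub_self] at hsf
  exact hf.ne_zero hsf.symm

variable (Γ R) in
theorem exists_completeOrthogonalIdempotents_permuted [Finite R] :
    ∃ (m : ℕ) (e : Fin m → R), CompleteOrthogonalIdempotents e ∧ (∀ i, e i ≠ 0) ∧
      (∀ (γ : Γ) (i), ∃ j, γ • e i = e j) ∧
      ∀ i f, IsIdempotentElem f → e i * f = f → f * e i = f →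
        (∀ γ : Γ, γ • e i = e i → Commute f (γ • f)) → f = 0 ∨ f = e i := by
  obtain ⟨D, hD⟩ := exists_maximal_isInvariantIdempotents (Γ := Γ) (R := R)
  obtain ⟨m, ⟨ε⟩⟩ := Finite.exists_equiv_fin {e // IsIdempotentAtom D e}
  let e (i : Fin m) : R := ε.symm i
  have he (i : Fin m) : IsIdempotentAtom D (e i) := (ε.symm i).2
  have hatom (f : R) : IsIdempotentAtom D f ↔ ∃ i, e i = f :=
    ⟨fun hf => ⟨ε ⟨f, hf⟩, by simp [e]⟩, by rintro ⟨i, rfl⟩; exact he i⟩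
  have horth : OrthogonalIdempotents e := by
    refine ⟨fun i => hD.prop.idem _ (he i).mem, fun i j hij => ?_⟩
    exact (he i).mul_eq_zero_of_ne (he j) hD.prop
      fun h => hij (ε.symm.injective (Subtype.ext h))
  refine ⟨m, e, ⟨horth, sum_eq_one_of_isIdempotentAtom hD horth hatom⟩, fun i => (he i).ne_zero,
    fun γ i => ?_, fun i f hf hef hfe hcomm => ?_⟩
  · obtain ⟨j, hj⟩ := (hatom _).1 ((he i).smul hD.prop γ)
    exact ⟨j, hj.symm⟩
  · have hfD : f ∈ D := by
      refine mem_of_maximal_isInvariantIdempotents hD hf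
        (fun d => (he i).commute_of_mul_eq hD.prop hef hfe) fun γ => ?_
      by_cases hγ : γ • e i = e i
      · exact hcomm γ hγ
      -- the atoms `e i` and `γ • e i` above `f` and `γ • f` are orthogonal
      · have h1 := (he i).mul_eq_zero_of_ne ((he i).smul hD.prop γ) hD.prop (Ne.symm hγ)
        have h2 := ((he i).smul hD.prop γ).mul_eq_zero_of_ne (he i) hD.prop hγ
        calc f * γ • f = f * (e i * γ • e i) * γ • f := by
              rw [← mul_assoc, hfe, mul_assoc, ← smul_mul', hef]
          _ = γ • f * (γ • e i * e i) * f := by rw [h1, h2]; simp only [mul_zero, zero_mul]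
          _ = γ • f * f := by rw [← mul_assoc, ← smul_mul', hfe, mul_assoc, hef]
    have h := (he i).mul_eq f hfD
    rwa [hfe] at h

end InvariantIdempotents

theorem mem_units_centralizer_iff {R : Type*} [Monoid R] {S : Set R} {x : Rˣ} :
    x ∈ (Submonoid.centralizer S).units ↔ ∀ s ∈ S, Commute s (x : R) :=
  ⟨fun hx => hx.1, fun hx => ⟨hx, fun s hs => ((hx s hs).units_inv_right).eq⟩⟩

theorem le_normalizer_units_centralizer_range {R ι : Type*} [Monoid R] {H : Subgroup Rˣ}
    {e : ι → R} (hperm : ∀ h ∈ H, ∀ i, ∃ j, (h : R) * e i = e j * h) :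
    H ≤ Subgroup.normalizer ((Submonoid.centralizer (Set.range e)).units : Set Rˣ) := by
  refine Subgroup.le_normalizer_iff.2 fun h hh x hx => ?_
  simp only [mem_units_centralizer_iff, Set.forall_mem_range] at hx ⊢
  intro i
  obtain ⟨j, hj⟩ := hperm h⁻¹ (inv_mem hh) i
  have hconj : e i = h * e j * (h⁻¹ : Rˣ) := by rw [mul_assoc, ← hj, Units.mul_inv_cancel_left]
  calc e i * (h * x * h⁻¹ : Rˣ) = h * (e j * x) * (h⁻¹ : Rˣ) := by
        rw [hconj]; simp [mul_assoc]
    _ = (h * x * h⁻¹ : Rˣ) * e i := by rw [(hx j).eq, hconj]; simp [mul_assoc]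

section SubgroupOf

variable {G G' : Type*} [Group G] [Group G'] {H C : Subgroup G} (f : C →* G')

theorem isSolvable_map_subgroupOf (hs : Group.IsSolvable H) :
    Group.IsSolvable ((H.subgroupOf C).map f) := by
  have hinj : Function.Injective (C.subtype.subgroupComap H) := fun x y hxy =>
    Subtype.ext (Subtype.ext (congrArg (fun z : H => z.1) hxy))
  have : Group.IsSolvable (H.subgroupOf C) := Group.isSolvable_of_isSolvable_injective hinj
  exact Group.isSolvable_of_surjective (f.subgroupMap_surjective (H.subgroupOf C))

theorem card_map_subgroupOf_dvd : Nat.card ((H.subgroupOf C).map f) ∣ Nat.card H :=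
  (Subgroup.card_map_dvd _ _).trans
    (Subgroup.card_comap_dvd_of_injective _ _ C.subtype_injective)

end SubgroupOf

section Compress

variable {F V W : Type*} [Field F] [AddCommGroup V] [Module F V] [AddCommGroup W] [Module F W]
variable (P : W →ₗ[F] V) (Q : V →ₗ[F] W) (h : Q ∘ₗ P = LinearMap.id)

/-- The action on the direct summand `P W` of the units commuting with the projection `P Q` onto
it, transported to `W`. -/
def compress : (Submonoid.centralizer {P ∘ₗ Q}).units →* (Module.End F W)ˣ :=
  MonoidHom.toHomUnits
    { toFun g := Q ∘ₗ (g.1 : Module.End F V) ∘ₗ P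
      map_one' := h
      map_mul' g g' := by
        have hg' : (P ∘ₗ Q) * g'.1 = g'.1 * (P ∘ₗ Q) := g'.2.1 _ rfl
        ext w
        have hw : P (Q (g'.1.1 (P w))) = g'.1.1 (P (Q (P w))) := LinearMap.congr_fun hg' (P w)
        have hQP : Q (P w) = w := LinearMap.congr_fun h w
        simp [hw, hQP] }

variable {P Q h}

theorem comp_compress (g : (Submonoid.centralizer {P ∘ₗ Q}).units) :
    P ∘ₗ (compress P Q h g : Module.End F W) = (g.1 : Module.End F V) ∘ₗ P := by
  have hg : (P ∘ₗ Q) * g.1 = g.1 * (P ∘ₗ Q) := g.2.1 _ rfl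
  calc P ∘ₗ (compress P Q h g : Module.End F W) = ((P ∘ₗ Q : Module.End F V) * g.1.1) ∘ₗ P := rfl
    _ = g.1.1 ∘ₗ (P ∘ₗ (Q ∘ₗ P)) := by rw [hg]; rfl
    _ = g.1.1 ∘ₗ P := by rw [h, LinearMap.comp_id]

theorem compress_comp (g : (Submonoid.centralizer {P ∘ₗ Q}).units) :
    (compress P Q h g : Module.End F W) ∘ₗ Q = Q ∘ₗ (g.1 : Module.End F V) := by
  have hg : (P ∘ₗ Q) * g.1 = g.1 * (P ∘ₗ Q) := g.2.1 _ rfl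
  calc (compress P Q h g : Module.End F W) ∘ₗ Q = Q ∘ₗ (g.1.1 * (P ∘ₗ Q : Module.End F V)) := rfl
    _ = (Q ∘ₗ P) ∘ₗ (Q ∘ₗ g.1.1) := by rw [← hg]; rfl
    _ = Q ∘ₗ g.1.1 := by rw [h, LinearMap.id_comp]

theorem conj_comp_comp (g : (Submonoid.centralizer {P ∘ₗ Q}).units) (f : Module.End F W) :
    (g.1 : Module.End F V) * (P ∘ₗ f ∘ₗ Q) * (g.1⁻¹ : (Module.End F V)ˣ) =
      P ∘ₗ ((compress P Q h g : Module.End F W) * f *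
        ((compress P Q h g)⁻¹).val) ∘ₗ Q := by
  have hinv := compress_comp (h := h) g⁻¹
  rw [map_inv] at hinv
  calc (g.1 : Module.End F V) * (P ∘ₗ f ∘ₗ Q) * (g.1⁻¹ : (Module.End F V)ˣ)
      = (g.1.1 ∘ₗ P) ∘ₗ f ∘ₗ (Q ∘ₗ (g⁻¹).1.1) := rfl
    _ = (P ∘ₗ (compress P Q h g).1) ∘ₗ f ∘ₗ ((compress P Q h g)⁻¹.1 ∘ₗ Q) := by
      rw [comp_compress, hinv]

theorem comp_comp_mul_comp_comp (h : Q ∘ₗ P = LinearMap.id) (f f' : Module.End F W) :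
    (P ∘ₗ f ∘ₗ Q : Module.End F V) * (P ∘ₗ f' ∘ₗ Q) = P ∘ₗ (f * f') ∘ₗ Q := by
  calc (P ∘ₗ f ∘ₗ Q : Module.End F V) * (P ∘ₗ f' ∘ₗ Q) = P ∘ₗ f ∘ₗ (Q ∘ₗ P) ∘ₗ f' ∘ₗ Q := rfl
    _ = P ∘ₗ (f * f') ∘ₗ Q := by rw [h]; rfl

theorem comp_comp_injective (h : Q ∘ₗ P = LinearMap.id) :
    Function.Injective fun f : Module.End F W => P ∘ₗ f ∘ₗ Q := fun f f' hff' => by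
  have hcorner (f : Module.End F W) : Q ∘ₗ (P ∘ₗ f ∘ₗ Q) ∘ₗ P = f := by
    calc Q ∘ₗ (P ∘ₗ f ∘ₗ Q) ∘ₗ P = (Q ∘ₗ P) ∘ₗ f ∘ₗ (Q ∘ₗ P) := rfl
      _ = f := by rw [h, LinearMap.id_comp, LinearMap.comp_id]
  rw [← hcorner f, ← hcorner f']
  exact congrArg (fun x => Q ∘ₗ x ∘ₗ P) hff'

theorem compress_extendByOne (M : (Module.End F W)ˣ)
    (hM : Units.map (extendByOne P Q h) M ∈ (Submonoid.centralizer {P ∘ₗ Q}).units) :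
    compress P Q h ⟨_, hM⟩ = M := by
  ext w
  have hQP (w : W) : Q (P w) = w := LinearMap.congr_fun h w
  change Q (extendByOne P Q h M (P w)) = M.1 w
  rw [extendByOne_apply, map_add, hQP, hQP, add_sub_cancel]

end Compress

section PermutedBlocks

variable {F V : Type*} [Field F] [AddCommGroup V] [Module F V]
variable {H : Subgroup (Module.End F V)ˣ} {m : ℕ} {e : Fin m → Module.End F V}

theorem commute_extendByOne {W : Type*} [AddCommGroup W] [Module F W] {P : W →ₗ[F] V}
    {Q : V →ₗ[F] W} (h : Q ∘ₗ P = LinearMap.id) (he : OrthogonalIdempotents e) {i : Fin m}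
    (hPQ : P ∘ₗ Q = e i) (M : Module.End F W) (j : Fin m) :
    Commute (e j) (extendByOne P Q h M) := by
  have hP : P = e i ∘ₗ P := by rw [← hPQ, LinearMap.comp_assoc, h, LinearMap.comp_id]
  have hQ : Q = Q ∘ₗ e i := by rw [← hPQ, ← LinearMap.comp_assoc, h, LinearMap.id_comp]
  refine (Commute.one_right _).add_right ?_
  rcases eq_or_ne j i with rfl | hij
  · rw [commute_iff_eq]
    calc e j * (P ∘ₗ (M - 1) ∘ₗ Q) = (e j ∘ₗ P) ∘ₗ (M - 1) ∘ₗ Q := rfl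
      _ = P ∘ₗ (M - 1) ∘ₗ (Q ∘ₗ e j) := by rw [← hP, ← hQ]
  · have h1 : e j ∘ₗ P = 0 := by
      rw [hP, ← LinearMap.comp_assoc]
      exact (congrArg (· ∘ₗ P) (he.ortho hij)).trans (LinearMap.zero_comp P)
    have h2 : Q ∘ₗ e j = 0 := by
      rw [hQ, LinearMap.comp_assoc]
      exact (congrArg (Q ∘ₗ ·) (he.ortho hij.symm)).trans (LinearMap.comp_zero Q)
    rw [commute_iff_eq]
    calc e j * (P ∘ₗ (M - 1) ∘ₗ Q) = (e j ∘ₗ P) ∘ₗ (M - 1) ∘ₗ Q := rfl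
      _ = P ∘ₗ (M - 1) ∘ₗ (Q ∘ₗ e j) := by
        rw [h1, h2, LinearMap.zero_comp, LinearMap.comp_zero, LinearMap.comp_zero]

theorem index_map_compress_dvd [Finite (Module.End F V)] {W : Type*} [AddCommGroup W]
    [Module F W] {P : W →ₗ[F] V} {Q : V →ₗ[F] W} (h : Q ∘ₗ P = LinearMap.id)
    (he : OrthogonalIdempotents e) {i : Fin m} (hPQ : P ∘ₗ Q = e i)
    (hperm : ∀ h ∈ H, ∀ i, ∃ j, (h : Module.End F V) * e i = e j * h) :
    ((H.subgroupOf (Submonoid.centralizer {P ∘ₗ Q}).units).map (compress P Q h)).index ∣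
      H.index := by
  let B := (Submonoid.centralizer (Set.range e)).units
  have hB : B ≤ (Submonoid.centralizer {P ∘ₗ Q}).units :=
    Submonoid.units_mono (Submonoid.centralizer_le (by rw [hPQ]; simp))
  let ψ : B →* (Module.End F W)ˣ := (compress P Q h).comp (Subgroup.inclusion hB)
  have hψ : Function.Surjective ψ := fun M => by
    have hM : Units.map (extendByOne P Q h) M ∈ B := by
      refine mem_units_centralizer_iff.2 ?_
      rintro _ ⟨j, rfl⟩
      exact commute_extendByOne h he hPQ M j
    exact ⟨⟨_, hM⟩, compress_extendByOne M (hB hM)⟩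
  have hle : (H.subgroupOf B).map ψ ≤
      (H.subgroupOf (Submonoid.centralizer {P ∘ₗ Q}).units).map (compress P Q h) := by
    rintro _ ⟨b, hb, rfl⟩
    exact ⟨Subgroup.inclusion hB b, hb, rfl⟩
  exact (Subgroup.index_dvd_of_le hle).trans ((Subgroup.index_map_dvd _ hψ).trans
    (relIndex_dvd_index_of_le_normalizer (le_normalizer_units_centralizer_range hperm)))

variable [Finite F] [Module.Finite F V] (p : ℕ) [Fact p.Prime] [CharP F p]

theorem finrank_range_le_two (h2 : (2 : F) ≠ 0) (h3 : (3 : F) ≠ 0) (hs : Group.IsSolvable H)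
    (hp : ¬ p ∣ Nat.card H) (hH : ¬ 2 ∣ H.index) (he : OrthogonalIdempotents e)
    (hperm : ∀ h ∈ H, ∀ i, ∃ j, (h : Module.End F V) * e i = e j * h) {i : Fin m}
    (hmin : ∀ f, IsIdempotentElem f → e i * f = f → f * e i = f →
      (∀ h ∈ H, (h : Module.End F V) * e i * (h⁻¹ : (Module.End F V)ˣ) = e i →
        Commute f (h * f * (h⁻¹ : (Module.End F V)ˣ))) → f = 0 ∨ f = e i) :
    Module.finrank F (LinearMap.range (e i)) ≤ 2 := by
  have : Finite (Module.End F V) := Module.finite_of_finite F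
  let P := (LinearMap.range (e i)).subtype
  let Q := (e i).rangeRestrict
  have hPQ : P ∘ₗ Q = e i := rfl
  have h : Q ∘ₗ P = LinearMap.id := by
    ext ⟨_, v, rfl⟩
    exact LinearMap.congr_fun (he.idem i) v
  let C := (Submonoid.centralizer {P ∘ₗ Q}).units
  by_contra! hrank
  obtain ⟨f, hf, hf0, hf1, hcomm⟩ := hasCommutingIdempotent_of_isSolvable p h2 h3 hrank
    (isSolvable_map_subgroupOf (compress P Q h) hs)
    (fun hd => hp (hd.trans (card_map_subgroupOf_dvd _)))
    fun hd => hH (hd.trans (index_map_compress_dvd h he hPQ hperm))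
  have hcommf (g : (Module.End F V)ˣ) (hg : g ∈ H)
      (hge : (g : Module.End F V) * e i * (g⁻¹ : (Module.End F V)ˣ) = e i) :
      Commute (P ∘ₗ f ∘ₗ Q) (g * (P ∘ₗ f ∘ₗ Q) * (g⁻¹ : (Module.End F V)ˣ)) := by
    have hgC : g ∈ C := by
      simp only [C, mem_units_centralizer_iff, Set.mem_singleton_iff, forall_eq, hPQ]
      exact ((Units.mul_inv_eq_iff_eq_mul g).1 hge).symm
    rw [conj_comp_comp (h := h) ⟨g, hgC⟩, commute_iff_eq, comp_comp_mul_comp_comp h,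
      comp_comp_mul_comp_comp h, (hcomm _ ⟨⟨g, hgC⟩, hg, rfl⟩).eq]
  have hinj := comp_comp_injective h
  rcases hmin (P ∘ₗ f ∘ₗ Q) ((comp_comp_mul_comp_comp h f f).trans (by rw [hf.eq]))
    ((comp_comp_mul_comp_comp h 1 f).trans (by rw [one_mul]))
    ((comp_comp_mul_comp_comp h f 1).trans (by rw [mul_one])) hcommf with hfe | hfe
  · exact hf0 (hinj (hfe.trans (by simp)))
  · exact hf1 (hinj hfe)

theorem exists_small_blocks_permuted (h2 : (2 : F) ≠ 0) (h3 : (3 : F) ≠ 0)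
    (hn : 3 ≤ Module.finrank F V) (hs : Group.IsSolvable H) (hp : ¬ p ∣ Nat.card H)
    (hH : ¬ 2 ∣ H.index) :
    ∃ (m : ℕ) (e : Fin m → Module.End F V), 2 ≤ m ∧ CompleteOrthogonalIdempotents e ∧
      (∀ i, e i ≠ 0) ∧ (∀ i, Module.finrank F (LinearMap.range (e i)) ≤ 2) ∧
      ∀ h ∈ H, ∀ i, ∃ j, (h : Module.End F V) * e i = e j * h := by
  have : Finite (Module.End F V) := Module.finite_of_finite F
  let Γ := H.comap (ConjAct.ofConjAct (G := (Module.End F V)ˣ)).toMonoidHom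
  obtain ⟨m, e, hdec, h0, hperm, hmin⟩ :=
    exists_completeOrthogonalIdempotents_permuted Γ (Module.End F V)
  have hperm' (g : (Module.End F V)ˣ) (hg : g ∈ H) (i : Fin m) :
      ∃ j, (g : Module.End F V) * e i = e j * g := by
    obtain ⟨j, hj⟩ := hperm ⟨ConjAct.toConjAct g, hg⟩ i
    exact ⟨j, (Units.mul_inv_eq_iff_eq_mul g).1 hj⟩
  have hrank (i : Fin m) : Module.finrank F (LinearMap.range (e i)) ≤ 2 :=
    finrank_range_le_two p h2 h3 hs hp hH hdec.toOrthogonalIdempotents hperm'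
      fun f hf hef hfe hcomm => hmin i f hf hef hfe fun g => hcomm g.1 g.2
  refine ⟨m, e, ?_, hdec, h0, hrank, hperm'⟩
  have : Nontrivial V := Module.nontrivial_of_finrank_pos (R := F) (by omega)
  by_contra! hm
  interval_cases m
  · exact one_ne_zero (α := Module.End F V) (by simpa using hdec.complete.symm)
  · have hr := hrank 0
    rw [show e 0 = 1 by simpa using hdec.complete, Module.End.one_eq_id,
      LinearMap.range_id, finrank_top] at hr
    omega

end PermutedBlocks

section GeneralLinear

variable {F : Type*} [Field F] [Finite F] {n : ℕ} {H : Subgroup (GL (Fin n) F)}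

theorem exists_inter_conj_scalar_of_three_le (p : ℕ) [Fact p.Prime] [CharP F p]
    (h2 : (2 : F) ≠ 0) (h3 : (3 : F) ≠ 0) (hn : 3 ≤ n) (hs : Group.IsSolvable H)
    (hp : ¬ p ∣ Nat.card H) (hH : ¬ 2 ∣ H.index) :
    ∃ x : Fin 3 → GL (Fin n) F, (∀ s, x s ∈ SLsub n F) ∧ ∀ g ∈ H,
      (∀ s, x s * g * (x s)⁻¹ ∈ H) → g ∈ Subgroup.center (GL (Fin n) F) := by
  let φ : GL (Fin n) F ≃* (Module.End F (Fin n → F))ˣ :=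
    Units.mapEquiv (Matrix.toLinAlgEquiv' (R := F) (n := Fin n)).toMulEquiv
  let H' := H.map φ.toMonoidHom
  have hs' : Group.IsSolvable H' := Group.isSolvable_of_surjective
    (f := φ.toMonoidHom.subgroupMap H) (MonoidHom.subgroupMap_surjective _ _)
  obtain ⟨m, e, hm, hdec, h0, hr, hperm⟩ := exists_small_blocks_permuted p h2 h3
    (by simpa using hn) hs' (fun h => hp (h.trans (Subgroup.card_map_dvd _ _)))
    fun h => hH (h.trans (Subgroup.index_map_dvd _ φ.surjective))
  obtain ⟨x, hx, hscalar⟩ := exists_units_forall_permutes_mem_scalarUnits hm hdec h0 hr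
  refine ⟨fun s => φ.symm (x s), fun s => ?_, fun g hg hgx => ?_⟩
  · have hdet := hx s
    rw [← φ.apply_symm_apply (x s)] at hdet
    exact (LinearMap.det_toLin' _).symm.trans hdet
  · have hφg : φ g ∈ scalarUnits F (Module.End F (Fin n → F)) :=
      hscalar (φ g) (hperm _ ⟨g, hg, rfl⟩) fun s => hperm _ ⟨_, hgx s, by simp⟩
    refine Subgroup.mem_center_iff.2 fun k => φ.injective ?_
    simpa using Subgroup.mem_center_iff.1 (scalarUnits_le_center hφg) (φ k)

end GeneralLinear

section TwoByTwo

variable {F : Type*} [Field F] {c x y : Matrix (Fin 2) (Fin 2) F}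

theorem exists_eq_smul_one_add_smul_of_commute (hc : c ∉ Set.range (Matrix.scalar (Fin 2)))
    (h : Commute c x) : ∃ s t : F, x = s • (1 : Matrix (Fin 2) (Fin 2) F) + t • c := by
  let D (a : Matrix (Fin 2) (Fin 2) F) : Fin 3 → F := ![a 0 0 - a 1 1, a 0 1, a 1 0]
  have hD0 : D c ≠ 0 := by
    intro h0
    have h00 : c 0 0 - c 1 1 = 0 := congrFun h0 0
    have h01 : c 0 1 = 0 := congrFun h0 1
    have h10 : c 1 0 = 0 := congrFun h0 2
    refine hc ⟨c 1 1, ?_⟩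
    ext i j
    fin_cases i <;> fin_cases j <;> simp [h01, h10, ← sub_eq_zero.1 h00]
  have hcross : crossProduct (D c) (D x) = 0 := by
    have e (i j) : c i 0 * x 0 j + c i 1 * x 1 j = x i 0 * c 0 j + x i 1 * c 1 j := by
      simpa only [Matrix.mul_apply, Fin.sum_univ_two] using congrFun₂ h.eq i j
    ext i
    fin_cases i <;> simp [D, cross_apply]
    · linear_combination e 0 0
    · linear_combination e 1 0
    · linear_combination e 0 1
  have hdep : ¬ LinearIndependent F ![D c, D x] := fun hli =>
    crossProduct_ne_zero_iff_linearIndependent.2 hli hcross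
  simp only [LinearIndependent.pair_iff' hD0, ne_eq, not_forall, not_not] at hdep
  obtain ⟨t, ht⟩ := hdep
  have h00 : t * (c 0 0 - c 1 1) = x 0 0 - x 1 1 := congrFun ht 0
  have h01 : t * c 0 1 = x 0 1 := congrFun ht 1
  have h10 : t * c 1 0 = x 1 0 := congrFun ht 2
  refine ⟨x 1 1 - t * c 1 1, t, ?_⟩
  ext i j
  fin_cases i <;> fin_cases j <;> simp [← h01, ← h10]
  linear_combination -h00

theorem commute_of_commute_of_notMem_range_scalar (hc : c ∉ Set.range (Matrix.scalar (Fin 2)))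
    (hx : Commute c x) (hy : Commute c y) : Commute x y := by
  obtain ⟨s, t, rfl⟩ := exists_eq_smul_one_add_smul_of_commute hc hx
  exact ((Commute.one_left y).smul_left s).add_left (hy.smul_left t)

theorem exists_eq_smul_of_commute_of_trace_eq_zero (h2 : (2 : F) ≠ 0)
    (hc : c ∉ Set.range (Matrix.scalar (Fin 2))) (h : Commute c x) (hct : c.trace = 0)
    (hxt : x.trace = 0) : ∃ t : F, x = t • c := by
  obtain ⟨s, t, rfl⟩ := exists_eq_smul_one_add_smul_of_commute hc h
  have hs : s = 0 := by simpa [hct, h2] using hxt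
  exact ⟨t, by rw [hs, zero_smul, zero_add]⟩

theorem sq_eq_neg_det_smul_one_of_trace_eq_zero (hc : c.trace = 0) :
    c ^ 2 = -c.det • (1 : Matrix (Fin 2) (Fin 2) F) := by
  have h := Matrix.aeval_self_charpoly c
  rw [Matrix.charpoly_fin_two, hc] at h
  simpa [Algebra.algebraMap_eq_smul_one, add_eq_zero_iff_eq_neg] using h

end TwoByTwo

section Projective

open Matrix.ProjGenLinGroup
open scoped MatrixGroups

instance finite_projGenLinGroup {ι F : Type*} [Fintype ι] [DecidableEq ι] [CommRing F] [Finite F] :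
    Finite (Matrix.ProjGenLinGroup ι F) :=
  Finite.of_surjective mk mk_surjective

theorem commute_mk_iff_exists_mul_eq_smul {ι F : Type*} [Fintype ι] [DecidableEq ι] [Field F]
    {a b : GL ι F} :
    Commute (mk a) (mk b) ↔ ∃ t : F, (a : Matrix ι ι F) * b = t • ((b : Matrix ι ι F) * a) := by
  constructor
  · intro h
    obtain ⟨z, hz⟩ := mk_eq_mk_iff.1 (h.eq.symm : mk (b * a) = mk (a * b))
    have hz' := congrArg Units.val hz
    exact ⟨z, by simpa [← Matrix.smul_eq_mul_diagonal] using hz'.symm⟩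
  · rintro ⟨t, ht⟩
    rcases isEmpty_or_nonempty ι with _ | _
    · exact congrArg mk (Units.ext (Subsingleton.elim _ _) : a * b = b * a)
    have ht0 : t ≠ 0 := by
      rintro rfl
      exact (a * b).ne_zero (by rw [Units.val_mul, ht, zero_smul])
    refine (mk_eq_mk_iff (g₁ := b * a) (g₂ := a * b)).2 ⟨Units.mk0 t ht0, Units.ext ?_⟩ |>.symm
    simp [← Matrix.smul_eq_mul_diagonal, ht]

theorem commute_of_commute_mk_of_trace_ne_zero {ι F : Type*} [Fintype ι] [DecidableEq ι] [Field F]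
    {u a : GL ι F} (hu : (u : Matrix ι ι F).trace ≠ 0) (h : Commute (mk u) (mk a)) :
    Commute u a := by
  obtain ⟨t, ht⟩ := commute_mk_iff_exists_mul_eq_smul.1 h
  have hconj : (u : Matrix ι ι F) = t • ((a : Matrix ι ι F) * u * (a⁻¹ : GL ι F)) := by
    rw [← smul_mul_assoc, ← ht, Units.mul_inv_cancel_right]
  have htr : (u : Matrix ι ι F).trace = t * (u : Matrix ι ι F).trace := by
    conv_lhs => rw [hconj, Matrix.trace_smul, Matrix.trace_mul_comm, Units.inv_mul_cancel_left]
    rfl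
  have ht1 : t = 1 := (mul_eq_right₀ hu).1 htr.symm
  exact Units.ext (by simpa [ht1] using ht)

theorem commute_or_semiconjBy_neg_of_commute_mk {F : Type*} [Field F] {a b : GL (Fin 2) F}
    (h : Commute (mk a) (mk b)) : Commute a b ∨ SemiconjBy a b (-b) := by
  obtain ⟨t, ht⟩ := commute_mk_iff_exists_mul_eq_smul.1 h
  have hdet := congrArg Matrix.det ht
  rw [Matrix.det_smul, Matrix.det_mul_comm, ← Units.val_mul, Fintype.card_fin] at hdet
  have ht2 : t ^ 2 = 1 := (mul_eq_right₀ (Matrix.GeneralLinearGroup.det_ne_zero _)).1 hdet.symm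
  exact (sq_eq_one_iff.1 ht2).imp (fun h1 => Units.ext (by simpa [h1] using ht))
    fun h1 => Units.ext (by simpa [h1] using ht)

theorem mem_center_of_commute_of_not_commute {F : Type*} [Field F] {a b c : GL (Fin 2) F}
    (hab : ¬ Commute a b) (hca : Commute c a) (hcb : Commute c b) :
    c ∈ Subgroup.center (GL (Fin 2) F) := by
  rw [Matrix.GeneralLinearGroup.mem_center_iff_val_mem_range_scalar]
  by_contra hc
  exact hab (commute_of_commute_of_notMem_range_scalar hc hca.units_val hcb.units_val).units_of_val

variable {F : Type*} [Field F]

theorem commute_inv_mul_of_commute_mk {g k l : GL (Fin 2) F} (hk : Commute (mk g) (mk k))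
    (hl : Commute (mk g) (mk l)) (hkl : Commute g k ↔ Commute g l) : Commute g (k⁻¹ * l) := by
  by_cases hgk : Commute g k
  · exact hgk.inv_right.mul_right (hkl.1 hgk)
  · have hk' := (commute_or_semiconjBy_neg_of_commute_mk hk).resolve_left hgk
    have hl' := (commute_or_semiconjBy_neg_of_commute_mk hl).resolve_left (hgk ∘ hkl.2)
    simpa [Commute] using hk'.inv_right.mul_right hl'

theorem card_inf_centralizer_mk_le_four {a b : GL (Fin 2) F} (hab : ¬ Commute a b) :
    Nat.card ↥(Subgroup.centralizer {mk a} ⊓ Subgroup.centralizer {mk b}) ≤ 4 := by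
  let C : Subgroup PGL(2, F) := Subgroup.centralizer {mk a} ⊓ Subgroup.centralizer {mk b}
  choose lift hlift using mk_surjective (n := Fin 2) (R := F)
  have hcomm (k : C) :
      Commute (mk a) (mk (lift k)) ∧ Commute (mk b) (mk (lift k)) := by
    rw [hlift]
    exact k.2.imp (fun h => (Subgroup.mem_centralizer_singleton_iff.1 h).symm)
      fun h => (Subgroup.mem_centralizer_singleton_iff.1 h).symm
  let sgn (k : C) : Prop × Prop := (Commute a (lift k), Commute b (lift k))
  have hinj : Function.Injective sgn := by
    intro k l hkl
    obtain ⟨ha, hb⟩ := Prod.ext_iff.1 hkl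
    have hcenter := mem_center_of_commute_of_not_commute hab
      (commute_inv_mul_of_commute_mk (hcomm k).1 (hcomm l).1 ha.to_iff).symm
      (commute_inv_mul_of_commute_mk (hcomm k).2 (hcomm l).2 hb.to_iff).symm
    rw [← mk_eq_one, map_mul, map_inv, hlift, hlift, inv_mul_eq_one] at hcenter
    exact Subtype.ext hcenter
  exact (Nat.card_le_card_of_injective sgn hinj).trans_eq (by simp)

end Projective

section ProjectiveLine

open Matrix.ProjGenLinGroup
open scoped MatrixGroups

theorem transvection_pow {ι R : Type*} [Fintype ι] [DecidableEq ι] [CommRing R] {i j : ι}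
    (h : i ≠ j) (c : R) (m : ℕ) :
    Matrix.transvection i j c ^ m = Matrix.transvection i j (m * c) := by
  induction m with
  | zero => simp
  | succ m ih =>
    rw [pow_succ, ih, Matrix.transvection_mul_transvection_same _ _ h, Nat.cast_succ, add_one_mul]

theorem mem_center_of_forall_commute_mk {n : ℕ} {F : Type*} [Field F] (p : ℕ) [CharP F p]
    (hn : (n : F) ≠ 0) {a : GL (Fin n) F}
    (ha : ∀ x ∈ SLsub n F, x ^ p = 1 → Commute (mk x) (mk a)) :
    a ∈ Subgroup.center (GL (Fin n) F) := by
  rw [Matrix.GeneralLinearGroup.mem_center_iff_val_mem_range_scalar]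
  refine Matrix.mem_range_scalar_of_commute_transvectionStruct fun t => ?_
  let x : GL (Fin n) F := ⟨t.toMatrix, t.inv.toMatrix, t.mul_inv, t.inv_mul⟩
  have hxp : x ^ p = 1 := Units.ext <| by
    simpa [x, Matrix.TransvectionStruct.toMatrix] using transvection_pow t.hij t.c p
  have htr : (x : Matrix (Fin n) (Fin n) F).trace ≠ 0 := by
    simpa [x, Matrix.TransvectionStruct.toMatrix, Matrix.transvection,
      Matrix.trace_single_eq_of_ne _ _ _ t.hij] using hn
  exact (commute_of_commute_mk_of_trace_ne_zero htr (ha x t.det hxp)).units_val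

variable {F : Type*} [Field F] (p : ℕ) [Fact p.Prime] [CharP F p]

theorem commute_mk_of_commute_conj {g a : GL (Fin 2) F} (h2 : (2 : F) ≠ 0)
    (hat : (a : Matrix (Fin 2) (Fin 2) F).trace = 0)
    (h : Commute a (g * a * g⁻¹)) : Commute (mk g) (mk a) := by
  by_cases hac : a ∈ Subgroup.center (GL (Fin 2) F)
  · rw [mk_eq_one.2 hac]
    exact Commute.one_right _
  rw [Matrix.GeneralLinearGroup.mem_center_iff_val_mem_range_scalar] at hac
  obtain ⟨t, ht⟩ := exists_eq_smul_of_commute_of_trace_eq_zero h2 hac h.units_val hat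
    (by rw [Units.val_mul, Units.val_mul, Matrix.trace_mul_comm, Units.inv_mul_cancel_left, hat])
  refine commute_mk_iff_exists_mul_eq_smul.2 ⟨t, ?_⟩
  rw [← smul_mul_assoc, ← ht, ← Units.val_mul, ← Units.val_mul, inv_mul_cancel_right]

theorem exists_eq_smul_one_add_of_mk_pow_ne_one (h2 : (2 : F) ≠ 0) {a : GL (Fin 2) F}
    (ha : mk a ^ p ≠ 1) :
    ∃ (b : GL (Fin 2) F) (t : F), (b : Matrix (Fin 2) (Fin 2) F).trace = 0 ∧
      b ∉ Subgroup.center (GL (Fin 2) F) ∧ (a : Matrix (Fin 2) (Fin 2) F) = t • 1 + b.val := by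
  let t : F := (a : Matrix (Fin 2) (Fin 2) F).trace / 2
  let b : Matrix (Fin 2) (Fin 2) F := a - t • 1
  have hab : (a : Matrix (Fin 2) (Fin 2) F) = t • 1 + b := (add_sub_cancel _ _).symm
  have hbt : b.trace = 0 := by simp [b, t, h2]
  have hbu : IsUnit b.det := by
    rw [isUnit_iff_ne_zero]
    intro hdet
    have hb2 : b ^ 2 = 0 := by rw [sq_eq_neg_det_smul_one_of_trace_eq_zero hbt, hdet]; simp
    have hap : (a : Matrix (Fin 2) (Fin 2) F) ^ p = t ^ p • 1 := by
      rw [hab, add_pow_char_of_commute _ ((Commute.one_left b).smul_left t),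
        pow_eq_zero_of_le (Fact.out : p.Prime).two_le hb2, add_zero, smul_pow, one_pow]
    refine ha ?_
    rw [← map_pow, mk_eq_one, Matrix.GeneralLinearGroup.mem_center_iff_val_mem_range_scalar]
    exact ⟨t ^ p, by rw [Units.val_pow_eq_pow_val, hap, Matrix.smul_one_eq_diagonal]; rfl⟩
  refine ⟨Matrix.GeneralLinearGroup.mk'' b hbu, t, hbt, fun hb => ha ?_, hab⟩
  obtain ⟨r, hr⟩ := Matrix.GeneralLinearGroup.mem_center_iff_val_mem_range_scalar.1 hb
  have hac : a ∈ Subgroup.center (GL (Fin 2) F) := by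
    refine Matrix.GeneralLinearGroup.mem_center_iff_val_mem_range_scalar.2 ⟨t + r, ?_⟩
    have hrb : Matrix.scalar (Fin 2) r = b := hr
    rw [map_add, hrb, hab, Matrix.smul_one_eq_diagonal]
    rfl
  rw [mk_eq_one.2 hac, one_pow]

theorem exists_centralized_or_normalized (h2 : (2 : F) ≠ 0) [Finite F] {L : Subgroup PGL(2, F)}
    (hs : Group.IsSolvable L) (hp : ¬ p ∣ Nat.card L) (hL : L ≠ ⊥) :
    (∃ a : GL (Fin 2) F, (a : Matrix (Fin 2) (Fin 2) F).trace = 0 ∧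
      a ∉ Subgroup.center (GL (Fin 2) F) ∧
      Subgroup.normalizer (L : Set PGL(2, F)) ≤ Subgroup.centralizer {mk a}) ∨
    ∃ B : Subgroup PGL(2, F), B ≠ ⊥ ∧ Nat.card B ≤ 4 ∧
      Subgroup.centralizer (B : Set PGL(2, F)) ≤ B ∧
      Subgroup.normalizer (L : Set PGL(2, F)) ≤ Subgroup.normalizer (B : Set PGL(2, F)) := by
  obtain ⟨A, hAL, hA, hAA, hnorm⟩ := exists_last_derived_term hs (mt (le_bot_iff.1) hL)
  by_cases hcomm : ∀ a b : GL (Fin 2) F, mk a ∈ A → mk b ∈ A → Commute a b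
  · left
    obtain ⟨k, hk, hk1⟩ := SetLike.not_le_iff_exists.1 hA
    obtain ⟨a, rfl⟩ := mk_surjective k
    have hap : mk a ^ p ≠ 1 := fun h => hp <| by
      rw [← orderOf_eq_prime h hk1]
      exact Subgroup.orderOf_dvd_natCard L (hAL hk)
    obtain ⟨b, t, hbt, hb, hab⟩ := exists_eq_smul_one_add_of_mk_pow_ne_one p h2 hap
    refine ⟨b, hbt, hb, fun g hg => ?_⟩
    obtain ⟨g, rfl⟩ := mk_surjective g
    refine Subgroup.mem_centralizer_singleton_iff.2 (commute_mk_of_commute_conj h2 hbt ?_)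
    have hconj : Commute a (g * a * g⁻¹) := hcomm _ _ hk
      (by simpa using (Subgroup.mem_normalizer_iff.1 (hnorm hg) _).1 hk)
    have hconj' := hconj.units_val
    rw [Units.val_mul, Units.val_mul, hab, mul_add, add_mul, mul_smul_comm, mul_one,
      smul_mul_assoc, Units.mul_inv] at hconj'
    have hscalar (y : Matrix (Fin 2) (Fin 2) F) : Commute (t • 1) y :=
      (Commute.one_left y).smul_left t
    have hbb := (hconj'.sub_left (hscalar _)).sub_right (hscalar _).symm
    rw [add_sub_cancel_left, add_sub_cancel_left] at hbb
    exact Commute.units_of_val hbb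
  · right
    push Not at hcomm
    obtain ⟨a, b, ha, hb, hab⟩ := hcomm
    have hAC : A ≤ Subgroup.centralizer (A : Set PGL(2, F)) :=
      Subgroup.commutator_eq_bot_iff_le_centralizer.1 (le_bot_iff.1 hAA)
    refine ⟨Subgroup.centralizer A, fun h => hA (hAC.trans h.le), ?_,
      Subgroup.centralizer_le hAC,
      hnorm.trans (normalizer_le_normalizer_centralizer _)⟩
    refine (Subgroup.card_le_of_le (le_inf (Subgroup.centralizer_le ?_)
      (Subgroup.centralizer_le ?_))).trans (card_inf_centralizer_mk_le_four hab)
    · exact Set.singleton_subset_iff.2 ha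
    · exact Set.singleton_subset_iff.2 hb

theorem exists_conj_notMem_of_ne_one [Finite F] (h2 : (2 : F) ≠ 0) (h3 : (3 : F) ≠ 0)
    {H : Subgroup PGL(2, F)} (hs : Group.IsSolvable H) (hp : ¬ p ∣ Nat.card H) {k : PGL(2, F)}
    (hk : k ≠ 1) : ∃ y ∈ (SLsub 2 F).map mk, y * k * y⁻¹ ∉ H := by
  by_contra! hcon
  obtain ⟨L, hLH, hkL, hSL⟩ := exists_subgroup_of_forall_conj_mem hcon
  have hL : L ≠ ⊥ := fun h => hk (Subgroup.mem_bot.1 (h ▸ hkL))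
  have hLs : Group.IsSolvable L :=
    Group.isSolvable_of_isSolvable_injective (Subgroup.inclusion_injective hLH)
  have hLp : ¬ p ∣ Nat.card L := fun h => hp (h.trans (Subgroup.card_dvd_of_le hLH))
  have hn : ((2 : ℕ) : F) ≠ 0 := mod_cast h2
  rcases exists_centralized_or_normalized p h2 hLs hLp hL with
    ⟨a, -, ha, hLa⟩ | ⟨B, hB, hB4, -, hLB⟩
  · exact ha <| mem_center_of_forall_commute_mk p hn fun x hx _ =>
      Subgroup.mem_centralizer_singleton_iff.1 (hLa (hSL (Subgroup.mem_map_of_mem _ hx)))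
  · obtain ⟨b, hbB, hb⟩ := SetLike.not_le_iff_exists.1 (mt le_bot_iff.1 hB)
    obtain ⟨b, rfl⟩ := mk_surjective b
    refine hb (mk_eq_one.2 (mem_center_of_forall_commute_mk p hn fun x hx hxp => ?_))
    have hcop : p.Coprime (Nat.card B).factorial := by
      refine (Fact.out : p.Prime).coprime_iff_not_dvd.2 fun hdvd => ?_
      have h4 : p ≤ 4 := (((Fact.out : p.Prime).dvd_factorial).1 hdvd).trans hB4
      have hp1 := (Fact.out : p.Prime).two_le
      have hp0 : (p : F) = 0 := CharP.cast_eq_zero F p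
      interval_cases p
      · exact h2 hp0
      · exact h3 hp0
      · exact absurd (Fact.out : Nat.Prime 4) (by decide)
    have hK : Subgroup.zpowers (mk x) ≤ Subgroup.normalizer (B : Set PGL(2, F)) :=
      Subgroup.zpowers_le.2 (hLB (hSL (Subgroup.mem_map_of_mem _ hx)))
    have hcard : Nat.card (Subgroup.zpowers (mk x)) ∣ p := by
      rw [Nat.card_zpowers]
      exact orderOf_dvd_of_pow_eq_one (by rw [← map_pow, hxp, map_one])
    have hone := Nat.eq_one_of_dvd_coprimes hcop
      ((Subgroup.relIndex_dvd_card _ _).trans hcard) (relIndex_centralizer_dvd_factorial hK)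
    exact ((Subgroup.mem_centralizer_iff.1
      (Subgroup.relIndex_eq_one.1 hone (Subgroup.mem_zpowers _))) _ hbB).symm

theorem exists_card_inf_conjBy_le_six [Finite F] (h2 : (2 : F) ≠ 0) (h3 : (3 : F) ≠ 0)
    {H : Subgroup PGL(2, F)} (hs : Group.IsSolvable H) (hp : ¬ p ∣ Nat.card H) :
    ∃ x ∈ (SLsub 2 F).map mk, Nat.card ↥(H ⊓ conjBy H x) ≤ 6 := by
  rcases eq_or_ne H ⊥ with rfl | hH
  · exact ⟨1, Subgroup.one_mem _, by simp⟩
  rcases exists_centralized_or_normalized p h2 hs hp hH with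
    ⟨a, hat, ha, hHa⟩ | ⟨B, hB, hB4, hCB, hHB⟩
  · obtain ⟨x, hx, hxa⟩ : ∃ x ∈ SLsub 2 F, ¬ Commute a (x * a * x⁻¹) := by
      by_contra! hcon
      exact ha (mem_center_of_forall_commute_mk p (by exact_mod_cast h2) fun x hx _ =>
        commute_mk_of_commute_conj h2 hat (hcon x hx))
    refine ⟨mk x⁻¹, Subgroup.mem_map_of_mem _ (inv_mem hx), ?_⟩
    refine (Subgroup.card_le_of_le (inf_le_inf (Subgroup.le_normalizer.trans hHa) ?_)).trans
      ((card_inf_centralizer_mk_le_four hxa).trans (by norm_num))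
    intro g hg
    have hg' : Commute (mk x⁻¹ * g * (mk x⁻¹)⁻¹) (mk a) := Subgroup.mem_centralizer_singleton_iff.1
      (hHa (Subgroup.le_normalizer (mem_conjBy.1 hg)))
    rw [Subgroup.mem_centralizer_singleton_iff]
    simpa [mul_assoc] using ((Commute.conj_iff (mk x)).2 hg').eq
  · obtain ⟨b, hbB, hb⟩ := SetLike.not_le_iff_exists.1 (mt le_bot_iff.1 hB)
    obtain ⟨y, hy, hyb⟩ := exists_conj_notMem_of_ne_one p h2 h3 hs hp hb
    exact ⟨y, hy, card_le_six_of_le_normalizer hB4 hCB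
      (inf_le_left.trans (Subgroup.le_normalizer.trans hHB))
      fun hle => hyb (mem_conjBy.1 (hle hbB).2)⟩

theorem exists_inter_conj_scalar_of_eq_two [Finite F] (h2 : (2 : F) ≠ 0) (h3 : (3 : F) ≠ 0)
    {H : Subgroup (GL (Fin 2) F)} (hs : Group.IsSolvable H) (hp : ¬ p ∣ Nat.card H) :
    ∃ x : Fin 3 → GL (Fin 2) F, (∀ s, x s ∈ SLsub 2 F) ∧
      ∀ g ∈ H, (∀ s, x s * g * (x s)⁻¹ ∈ H) → g ∈ Subgroup.center (GL (Fin 2) F) := by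
  have hs' : Group.IsSolvable (H.map mk) :=
    Group.isSolvable_of_surjective (mk.subgroupMap_surjective H)
  have hp' : ¬ p ∣ Nat.card (H.map mk) := fun h => hp (h.trans (H.card_map_dvd mk))
  have hmove (k : PGL(2, F)) (hk : k ≠ 1) :=
    exists_conj_notMem_of_ne_one p h2 h3 hs' hp' hk
  obtain ⟨_, ⟨x, hx, rfl⟩, hx6⟩ := exists_card_inf_conjBy_le_six p h2 h3 hs' hp'
  obtain ⟨_, ⟨y, hy, rfl⟩, hy3⟩ := exists_card_inf_conjBy_le hmove
    (H.map mk ⊓ conjBy (H.map mk) (mk x))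
  obtain ⟨_, ⟨z, hz, rfl⟩, hz1⟩ := exists_card_inf_conjBy_le hmove
    (H.map mk ⊓ conjBy (H.map mk) (mk x) ⊓ conjBy (H.map mk) (mk y))
  refine ⟨![x, y, z], Fin.forall_fin_succ.2 ⟨hx, Fin.forall_fin_two.2 ⟨hy, hz⟩⟩,
    fun g hg hconj => ?_⟩
  have hbot := (Subgroup.card_le_one_iff_eq_bot _).1 (hz1.trans (by omega))
  have hmem {t : GL (Fin 2) F} (ht : t * g * t⁻¹ ∈ H) : mk g ∈ conjBy (H.map mk) (mk t) :=
    mem_conjBy.2 ⟨_, ht, by simp⟩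
  rw [← mk_eq_one, ← Subgroup.mem_bot, ← hbot]
  exact ⟨⟨⟨Subgroup.mem_map_of_mem _ hg, hmem (hconj 0)⟩, hmem (hconj 1)⟩, hmem (hconj 2)⟩

end ProjectiveLine

theorem stmt9_general {F : Type*} [Field F] [Finite F] (p : ℕ) [Fact p.Prime] [CharP F p]
    (hp2 : p ≠ 2) (hp3 : p ≠ 3) {n : ℕ} (hn : 2 ≤ n) {H : Subgroup (GL (Fin n) F)}
    (hs : Group.IsSolvable H) (hp : ¬ p ∣ Nat.card H) (hH : ¬ 2 ∣ H.index) :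
    ∃ x ∈ SLsub n F, ∃ y ∈ SLsub n F, ∃ z ∈ SLsub n F,
      ∀ g ∈ H ⊓ conjBy H x ⊓ conjBy H y ⊓ conjBy H z,
        ∃ c : F, (g : Matrix (Fin n) (Fin n) F) = c • (1 : Matrix (Fin n) (Fin n) F) := by
  have h2 : (2 : F) ≠ 0 := mod_cast CharP.cast_ne_zero_of_ne_of_prime F Nat.prime_two hp2
  have h3 : (3 : F) ≠ 0 := mod_cast CharP.cast_ne_zero_of_ne_of_prime F Nat.prime_three hp3
  obtain ⟨x, hx, hcenter⟩ : ∃ x : Fin 3 → GL (Fin n) F, (∀ s, x s ∈ SLsub n F) ∧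
      ∀ g ∈ H, (∀ s, x s * g * (x s)⁻¹ ∈ H) → g ∈ Subgroup.center (GL (Fin n) F) := by
    rcases hn.eq_or_lt with rfl | hn
    · exact exists_inter_conj_scalar_of_eq_two p h2 h3 hs hp
    · exact exists_inter_conj_scalar_of_three_le p h2 h3 hn hs hp hH
  refine ⟨x 0, hx 0, x 1, hx 1, x 2, hx 2, fun g ⟨⟨⟨hg, h0⟩, h1⟩, h2⟩ => ?_⟩
  obtain ⟨c, hc⟩ := Matrix.GeneralLinearGroup.mem_center_iff_val_mem_range_scalar.1
    (hcenter g hg (by simpa [Fin.forall_fin_succ] using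
      ⟨mem_conjBy.1 h0, mem_conjBy.1 h1, mem_conjBy.1 h2⟩))
  exact ⟨c, by rw [← hc, Matrix.smul_one_eq_diagonal]; rfl⟩

theorem stmt9 (p f q n : ℕ) (hp : p.Prime) (hf : 1 ≤ f) (hq : q = p ^ f)
    (F : Type) [Field F] [Fintype F] (hcard : Fintype.card F = q)
    (hn : 2 ≤ n) (hnonsolv : ¬ IsSolvable (GL (Fin n) F))
    (π : Set ℕ) (hπ : ∀ r ∈ π, r.Prime) (h2pi : 2 ∈ π) (h3pi : 3 ∈ π) (hppi : p ∉ π)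
    (H : Subgroup (GL (Fin n) F)) (hH : IsHallSubgroup π H)
    (hsolv : IsSolvable ↥H)
    :
    ∃ x y z : GL (Fin n) F,
      x ∈ (H : Set (GL (Fin n) F)) * (SLsub n F : Set (GL (Fin n) F)) ∧
      y ∈ (H : Set (GL (Fin n) F)) * (SLsub n F : Set (GL (Fin n) F)) ∧
      z ∈ (H : Set (GL (Fin n) F)) * (SLsub n F : Set (GL (Fin n) F)) ∧
    ∀ g ∈ H ⊓ conjBy H x ⊓ conjBy H y ⊓ conjBy H z,
      ∃ c : F, (g : Matrix (Fin n) (Fin n) F) = c • (1 : Matrix (Fin n) (Fin n) F) := by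
  have : Fact p.Prime := ⟨hp⟩
  have : CharP F p := charP_of_card_eq_prime_pow (hcard.trans hq)
  obtain ⟨x, hx, y, hy, z, hz, hscalar⟩ := stmt9_general p (ne_of_mem_of_not_mem h2pi hppi).symm
    (ne_of_mem_of_not_mem h3pi hppi).symm hn hsolv (hppi ∘ hH.1 p hp) (hH.2 2 h2pi)
  have hsub : (SLsub n F : Set (GL (Fin n) F)) ⊆ H * SLsub n F := Set.subset_mul_right _ H.one_mem
  exact ⟨x, y, z, hsub hx, hsub hy, hsub hz, hscalar⟩
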